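/- Let D = {(q₁,q₂) ∈ ℂ² : F_{(q₁,q₂)} is degenerate} ⊆ ℂ² ≅ ℝ⁴ be the discriminant locus of the Fermat cubic. Then D is a compact and connected subset of ℝ⁴. -/

import Mathlib

open Complex MvPolynomial

/-- The restriction of the Fermat cubic to the twistor fibre over `q = q₁ + q₂·j`,
as a homogeneous binary cubic in `ℂ[λ₁, λ₂]`. -/
noncomputable def fermatFibrePoly (q₁ q₂ : ℂ) : MvPolynomial (Fin 2) ℂ :=
  (C q₁ * X 0 - C ((starRingEnd ℂ) q₂) * X 1) ^ 3
    + (C q₂ * X 0 + C ((starRingEnd ℂ) q₁) * X 1) ^ 3 + X 0 ^ 3 + X 1 ^ 3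

/-- The discriminant locus of the Fermat cubic, as a subset of `ℂ² ≅ ℝ⁴`: the points over
which the fibre cubic is degenerate (zero or not squarefree in `ℂ[λ₁,λ₂]`). -/
noncomputable def fermatDiscriminantLocus : Set (ℂ × ℂ) :=
  {q | ¬ Squarefree (fermatFibrePoly q.1 q.2)}


namespace FermatTw

set_option linter.unusedSimpArgs false

/-- the cubic -/
noncomputable def ff (a b : ℂ) : ℂ := a ^ 3 + b ^ 3
/-- a third of the derivative of the cubic along the quaternionic structure -/
noncomputable def gg (a b : ℂ) : ℂ :=
  - a ^ 2 * (starRingEnd ℂ) b + b ^ 2 * (starRingEnd ℂ) a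

lemma exists_zero (p : MvPolynomial (Fin 2) ℂ) (hp : ¬ IsUnit p) :
    ∃ v : Fin 2 → ℂ, v ≠ 0 ∧ eval v p = 0 := by
  by_contra hcon
  push Not at hcon
  have key : ∀ i : Fin 2, ∃ n : ℕ, p ∣ (X i : MvPolynomial (Fin 2) ℂ) ^ n := by
    intro i
    have h1 : (X i : MvPolynomial (Fin 2) ℂ) ∈
        vanishingIdeal ℂ (zeroLocus ℂ (Ideal.span {p})) := by
      rw [mem_vanishingIdeal_iff]
      intro x hx
      have hx' : eval x p = 0 := by
        have := (mem_zeroLocus_iff.1 hx) p (Ideal.subset_span rfl)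
        simpa [aeval_eq_eval] using this
      have : x = 0 := by
        by_contra hne
        exact hcon x hne hx'
      simp [this]
    rw [vanishingIdeal_zeroLocus_eq_radical] at h1
    obtain ⟨n, hn⟩ := h1
    exact ⟨n, Ideal.mem_span_singleton.1 hn⟩
  obtain ⟨n, hn⟩ := key 0
  obtain ⟨m, hm⟩ := key 1
  obtain ⟨i, hi, hassoc⟩ := (dvd_prime_pow (X_prime (R := ℂ) (i := (0 : Fin 2))) n).1 hn
  rcases Nat.eq_zero_or_pos i with h | h
  · subst h
    rw [pow_zero] at hassoc
    exact hp (hassoc.symm.isUnit isUnit_one)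
  · have h2 : (X 0 : MvPolynomial (Fin 2) ℂ) ∣ X 1 ^ m :=
      (dvd_pow_self _ h.ne').trans (hassoc.symm.dvd.trans hm)
    have h3 := (X_prime (R := ℂ) (i := (0 : Fin 2))).dvd_of_dvd_pow h2
    rw [X_dvd_X] at h3
    simp at h3

lemma mem_imp_pair (q : ℂ × ℂ) (hq : q ∈ fermatDiscriminantLocus) :
    ∃ v1 v2 : ℂ, (v1 ≠ 0 ∨ v2 ≠ 0) ∧
      ff (-(q.1 * v1 - (starRingEnd ℂ) q.2 * v2)) (-(q.2 * v1 + (starRingEnd ℂ) q.1 * v2))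
        = ff v1 v2 ∧
      gg (-(q.1 * v1 - (starRingEnd ℂ) q.2 * v2)) (-(q.2 * v1 + (starRingEnd ℂ) q.1 * v2))
        = gg v1 v2 := by
  obtain ⟨q1, q2⟩ := q
  simp only [fermatDiscriminantLocus, Set.mem_ofPred_eq] at hq
  have main : ∃ v : Fin 2 → ℂ, v ≠ 0 ∧ eval v (fermatFibrePoly q1 q2) = 0 ∧
      ∀ i, eval v (pderiv i (fermatFibrePoly q1 q2)) = 0 := by
    by_cases h0 : fermatFibrePoly q1 q2 = 0
    · refine ⟨fun _ => 1, ?_, ?_⟩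
      · intro h
        have := congrFun h 0
        simp at this
      · simp [h0]
    · unfold Squarefree at hq
      push Not at hq
      obtain ⟨p, ⟨h, hph⟩, hpu⟩ := hq
      obtain ⟨v, hv, hpv⟩ := exists_zero p hpu
      refine ⟨v, hv, ?_, ?_⟩
      · rw [hph]; simp [hpv]
      · intro i
        rw [hph]; simp [pderiv_mul, hpv]
  obtain ⟨v, hv, hF, hd⟩ := main
  refine ⟨v 0, v 1, ?_, ?_, ?_⟩
  · by_contra hcon
    push Not at hcon
    apply hv
    funext i
    fin_cases i
    · exact hcon.1
    · exact hcon.2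
  · simp [fermatFibrePoly] at hF
    simp only [ff]
    linear_combination -hF
  · have h0 := hd 0
    have h1 := hd 1
    simp [fermatFibrePoly, pderiv_pow, pderiv_X, pderiv_mul, Pi.single_apply] at h0 h1
    simp only [gg, map_neg, map_sub, map_add, map_mul, Complex.conj_conj]
    linear_combination (1/3 : ℂ) * (starRingEnd ℂ) (v 1) * h0 - (1/3 : ℂ) * (starRingEnd ℂ) (v 0) * h1

lemma pair_imp_mem (q1 q2 v1 v2 : ℂ) (hv : v1 ≠ 0 ∨ v2 ≠ 0)
    (hf : ff (-(q1 * v1 - (starRingEnd ℂ) q2 * v2)) (-(q2 * v1 + (starRingEnd ℂ) q1 * v2))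
        = ff v1 v2)
    (hg : gg (-(q1 * v1 - (starRingEnd ℂ) q2 * v2)) (-(q2 * v1 + (starRingEnd ℂ) q1 * v2))
        = gg v1 v2) : (q1, q2) ∈ fermatDiscriminantLocus := by
  simp only [fermatDiscriminantLocus, Set.mem_ofPred_eq]
  intro hsq
  set N : ℂ := v1 * (starRingEnd ℂ) v1 + v2 * (starRingEnd ℂ) v2 with hN
  have hN0 : N ≠ 0 := by
    rw [hN, Complex.mul_conj, Complex.mul_conj, ← Complex.ofReal_add]
    norm_cast
    rcases hv with h | h
    · have := Complex.normSq_pos.2 h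
      have := Complex.normSq_nonneg v2
      positivity
    · have := Complex.normSq_pos.2 h
      have := Complex.normSq_nonneg v1
      positivity
  set B : MvPolynomial (Fin 2) ℂ := C v1 * X 1 - C v2 * X 0 with hB
  set A : MvPolynomial (Fin 2) ℂ :=
    C ((starRingEnd ℂ) v1) * X 0 + C ((starRingEnd ℂ) v2) * X 1 with hA
  set u1 : ℂ := q1 * v1 - (starRingEnd ℂ) q2 * v2 with hu1
  set u2 : ℂ := q2 * v1 + (starRingEnd ℂ) q1 * v2 with hu2
  have hf' : u1 ^ 3 + u2 ^ 3 + v1 ^ 3 + v2 ^ 3 = 0 := by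
    simp only [ff] at hf; linear_combination -hf
  have hg' : - u1 ^ 2 * (starRingEnd ℂ) u2 + u2 ^ 2 * (starRingEnd ℂ) u1
      - v1 ^ 2 * (starRingEnd ℂ) v2 + v2 ^ 2 * (starRingEnd ℂ) v1 = 0 := by
    simp only [gg, map_neg] at hg; linear_combination -hg
  have hf2 := congrArg (C : ℂ → MvPolynomial (Fin 2) ℂ) hf'
  have hg2 := congrArg (C : ℂ → MvPolynomial (Fin 2) ℂ) hg'
  simp only [map_add, map_sub, map_mul, map_neg, map_pow, map_zero] at hf2 hg2
  have e1 : C N * (C q1 * X 0 - C ((starRingEnd ℂ) q2) * X 1) =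
      A * C u1 - B * C ((starRingEnd ℂ) u2) := by
    simp only [hN, hA, hB, hu1, hu2, map_add, map_sub, map_mul, Complex.conj_conj]; ring
  have e2 : C N * (C q2 * X 0 + C ((starRingEnd ℂ) q1) * X 1) =
      A * C u2 + B * C ((starRingEnd ℂ) u1) := by
    simp only [hN, hA, hB, hu1, hu2, map_add, map_sub, map_mul, Complex.conj_conj]; ring
  have e3 : C N * X 0 = A * C v1 - B * C ((starRingEnd ℂ) v2) := by
    simp only [hN, hA, hB, map_add, map_mul]; ring
  have e4 : C N * X 1 = A * C v2 + B * C ((starRingEnd ℂ) v1) := by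
    simp only [hN, hA, hB, map_add, map_mul]; ring
  have e5 : C N ^ 3 * fermatFibrePoly q1 q2 =
      (A * C u1 - B * C ((starRingEnd ℂ) u2)) ^ 3 + (A * C u2 + B * C ((starRingEnd ℂ) u1)) ^ 3
      + (A * C v1 - B * C ((starRingEnd ℂ) v2)) ^ 3
      + (A * C v2 + B * C ((starRingEnd ℂ) v1)) ^ 3 := by
    rw [← e1, ← e2, ← e3, ← e4, fermatFibrePoly]; ring
  have hdvd : B * B ∣ C N ^ 3 * fermatFibrePoly q1 q2 := by
    refine ⟨3 * A * (C u1 * C ((starRingEnd ℂ) u2) ^ 2 + C u2 * C ((starRingEnd ℂ) u1) ^ 2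
      + C v1 * C ((starRingEnd ℂ) v2) ^ 2 + C v2 * C ((starRingEnd ℂ) v1) ^ 2)
      + B * (- C ((starRingEnd ℂ) u2) ^ 3 + C ((starRingEnd ℂ) u1) ^ 3
        - C ((starRingEnd ℂ) v2) ^ 3 + C ((starRingEnd ℂ) v1) ^ 3), ?_⟩
    rw [e5]
    linear_combination A ^ 3 * hf2 + 3 * A ^ 2 * B * hg2
  have hunit : IsUnit ((C N : MvPolynomial (Fin 2) ℂ) ^ 3) :=
    ((isUnit_iff_ne_zero.2 hN0).map C).pow 3
  have hB2 := hsq B ((hunit.dvd_mul_left).1 hdvd)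
  obtain ⟨B', hB'⟩ := hB2.exists_right_inv
  have := congrArg (eval ![v1, v2]) hB'
  simp [hB] at this
  have h7 : v1 * v2 - v2 * v1 = 0 := by ring
  rw [h7] at this
  simp at this

lemma mul_conj_add_ne (w1 w2 : ℂ) (hw : w1 ≠ 0 ∨ w2 ≠ 0) :
    w1 * (starRingEnd ℂ) w1 + w2 * (starRingEnd ℂ) w2 ≠ 0 := by
  rw [Complex.mul_conj, Complex.mul_conj, ← Complex.ofReal_add]
  norm_cast
  rcases hw with h | h
  · have := Complex.normSq_pos.2 h
    have := Complex.normSq_nonneg w2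
    positivity
  · have := Complex.normSq_pos.2 h
    have := Complex.normSq_nonneg w1
    positivity

/-- first quaternion coordinate of the point determined by a pair -/
noncomputable def Q1 (u1 u2 w1 w2 : ℂ) : ℂ :=
  -(u1 * (starRingEnd ℂ) w1 + (starRingEnd ℂ) u2 * w2) /
    (w1 * (starRingEnd ℂ) w1 + w2 * (starRingEnd ℂ) w2)
/-- second quaternion coordinate of the point determined by a pair -/
noncomputable def Q2 (u1 u2 w1 w2 : ℂ) : ℂ :=
  -(u2 * (starRingEnd ℂ) w1 - (starRingEnd ℂ) u1 * w2) /
    (w1 * (starRingEnd ℂ) w1 + w2 * (starRingEnd ℂ) w2)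

lemma Q_mem (u1 u2 w1 w2 : ℂ) (hw : w1 ≠ 0 ∨ w2 ≠ 0) (hf : ff u1 u2 = ff w1 w2)
    (hg : gg u1 u2 = gg w1 w2) :
    (Q1 u1 u2 w1 w2, Q2 u1 u2 w1 w2) ∈ fermatDiscriminantLocus := by
  have hN := mul_conj_add_ne w1 w2 hw
  have hN' : (starRingEnd ℂ) w1 * w1 + (starRingEnd ℂ) w2 * w2 ≠ 0 := by
    rw [mul_comm, mul_comm _ w2]; exact hN
  have h1 : -(Q1 u1 u2 w1 w2 * w1 - (starRingEnd ℂ) (Q2 u1 u2 w1 w2) * w2) = u1 := by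
    simp only [Q1, Q2, map_div₀, map_neg, map_add, map_sub, map_mul, Complex.conj_conj]
    rw [mul_comm ((starRingEnd ℂ) w1) w1, mul_comm ((starRingEnd ℂ) w2) w2]
    generalize hNe : w1 * (starRingEnd ℂ) w1 + w2 * (starRingEnd ℂ) w2 = N at hN
    field_simp
    linear_combination u1 * hNe
  have h2 : -(Q2 u1 u2 w1 w2 * w1 + (starRingEnd ℂ) (Q1 u1 u2 w1 w2) * w2) = u2 := by
    simp only [Q1, Q2, map_div₀, map_neg, map_add, map_sub, map_mul, Complex.conj_conj]
    rw [mul_comm ((starRingEnd ℂ) w1) w1, mul_comm ((starRingEnd ℂ) w2) w2]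
    generalize hNe : w1 * (starRingEnd ℂ) w1 + w2 * (starRingEnd ℂ) w2 = N at hN
    field_simp
    linear_combination u2 * hNe
  apply pair_imp_mem _ _ w1 w2 hw
  · rw [h1, h2, hf]
  · rw [h1, h2, hg]

lemma mem_imp_Q (q : ℂ × ℂ) (hq : q ∈ fermatDiscriminantLocus) :
    ∃ u1 u2 w1 w2 : ℂ, (w1 ≠ 0 ∨ w2 ≠ 0) ∧ ff u1 u2 = ff w1 w2 ∧ gg u1 u2 = gg w1 w2 ∧
      q = (Q1 u1 u2 w1 w2, Q2 u1 u2 w1 w2) := by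
  obtain ⟨v1, v2, hv, hf, hg⟩ := mem_imp_pair q hq
  refine ⟨_, _, v1, v2, hv, hf, hg, ?_⟩
  have hN := mul_conj_add_ne v1 v2 hv
  ext1
  · simp only [Q1, map_neg, map_add, map_sub, map_mul, Complex.conj_conj]
    field_simp
    ring
  · simp only [Q2, map_neg, map_add, map_sub, map_mul, Complex.conj_conj]
    field_simp
    ring

/-- discriminant of a binary cubic -/
def disc (a b c d : ℂ) : ℂ := (a * d - b * c) ^ 2 - 4 * (a * c - b ^ 2) * (b * d - c ^ 2)

/-- discriminant of the fibre cubic -/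
noncomputable def Dq (q : ℂ × ℂ) : ℂ :=
  disc (q.1 ^ 3 + q.2 ^ 3 + 1)
    (- q.1 ^ 2 * (starRingEnd ℂ) q.2 + q.2 ^ 2 * (starRingEnd ℂ) q.1)
    (q.1 * (starRingEnd ℂ) q.2 ^ 2 + q.2 * (starRingEnd ℂ) q.1 ^ 2)
    (- (starRingEnd ℂ) q.2 ^ 3 + (starRingEnd ℂ) q.1 ^ 3 + 1)

lemma disc_of_root (a b c d v1 v2 : ℂ) (hv : v1 ≠ 0 ∨ v2 ≠ 0)
    (h1 : a * v1 ^ 2 + 2 * b * v1 * v2 + c * v2 ^ 2 = 0)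
    (h2 : b * v1 ^ 2 + 2 * c * v1 * v2 + d * v2 ^ 2 = 0) : disc a b c d = 0 := by
  unfold disc
  have k1 : v2 * (2 * (a * c - b ^ 2) * v1 + (a * d - b * c) * v2) = 0 := by
    linear_combination (-b) * h1 + a * h2
  have k2 : v1 * ((a * d - b * c) * v1 + 2 * (b * d - c ^ 2) * v2) = 0 := by
    linear_combination d * h1 - c * h2
  by_cases hv2 : v2 = 0
  · have hv1 : v1 ≠ 0 := by simpa [hv2] using hv
    subst hv2
    have ha : a = 0 := by simpa [hv1] using h1
    have hb : b = 0 := by simpa [hv1] using h2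
    subst ha hb; ring
  by_cases hv1 : v1 = 0
  · subst hv1
    have hc : c = 0 := by simpa [hv2] using h1
    have hd : d = 0 := by simpa [hv2] using h2
    subst hc hd; ring
  have l1 := (mul_eq_zero.1 k1).resolve_left hv2
  have l2 := (mul_eq_zero.1 k2).resolve_left hv1
  apply (mul_eq_zero.1 _).resolve_right hv2
  linear_combination (a * d - b * c) * l1 - 2 * (a * c - b ^ 2) * l2

lemma root_of_disc (a b c d : ℂ) (h : disc a b c d = 0) : ∃ v1 v2 : ℂ, (v1 ≠ 0 ∨ v2 ≠ 0) ∧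
    a * v1 ^ 2 + 2 * b * v1 * v2 + c * v2 ^ 2 = 0 ∧
    b * v1 ^ 2 + 2 * c * v1 * v2 + d * v2 ^ 2 = 0 := by
  unfold disc at h
  by_cases hA : a * c - b ^ 2 = 0
  · by_cases hC : b * d - c ^ 2 = 0
    · have hB : a * d - b * c = 0 := by
        rw [hA] at h; simpa using h
      by_cases ha : a = 0
      · subst ha
        have hb : b = 0 := by simpa using hA
        subst hb
        have hc : c = 0 := by simpa using hC
        subst hc
        exact ⟨1, 0, by simp, by simp, by simp⟩
      · refine ⟨-b, a, Or.inr ha, ?_, ?_⟩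
        · linear_combination a * hA
        · linear_combination a * hB - b * hA
    · refine ⟨2 * (b * d - c ^ 2), -(a * d - b * c), ?_, ?_, ?_⟩
      · left; simpa using hC
      · linear_combination c * h
      · linear_combination d * h
  · refine ⟨-(a * d - b * c), 2 * (a * c - b ^ 2), ?_, ?_, ?_⟩
    · right; simpa using hA
    · linear_combination a * h
    · linear_combination b * h

lemma mem_iff (q : ℂ × ℂ) : q ∈ fermatDiscriminantLocus ↔ Dq q = 0 := by
  obtain ⟨q1, q2⟩ := q
  constructor
  · intro hq
    obtain ⟨v1, v2, hv, hf, hg⟩ := mem_imp_pair _ hq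
    simp only [ff, gg, map_neg, map_add, map_sub, map_mul, Complex.conj_conj] at hf hg
    have hN := mul_conj_add_ne v1 v2 hv
    unfold Dq
    apply disc_of_root _ _ _ _ v1 v2 hv
    · apply (mul_eq_zero.1 _).resolve_left hN
      simp only
      linear_combination -(starRingEnd ℂ) v1 * hf + v2 * hg
    · apply (mul_eq_zero.1 _).resolve_left hN
      simp only
      linear_combination -(starRingEnd ℂ) v2 * hf - v1 * hg
  · intro h
    obtain ⟨v1, v2, hv, h1, h2⟩ := root_of_disc _ _ _ _ h
    simp only at h1 h2
    apply pair_imp_mem _ _ v1 v2 hv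
    · simp only [ff]
      linear_combination -v1 * h1 - v2 * h2
    · simp only [gg, map_neg, map_add, map_sub, map_mul, Complex.conj_conj]
      linear_combination (starRingEnd ℂ) v2 * h1 - (starRingEnd ℂ) v1 * h2



lemma normSq_ff_gg (a b : ℂ) : normSq (ff a b) + normSq (gg a b) =
    (normSq a + normSq b) * (normSq a ^ 2 + normSq b ^ 2) := by
  simp only [ff, gg, normSq_apply, pow_succ, pow_zero, one_mul, add_re, add_im, mul_re, mul_im,
    neg_re, neg_im, conj_re, conj_im]
  ring

lemma continuous_Dq : Continuous Dq := by
  unfold Dq disc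
  have : Continuous (fun z : ℂ => (starRingEnd ℂ) z) := Complex.continuous_conj
  fun_prop

lemma isClosed_D : IsClosed fermatDiscriminantLocus := by
  have : fermatDiscriminantLocus = Dq ⁻¹' {0} := by
    ext q; rw [mem_iff]; rfl
  rw [this]
  exact isClosed_singleton.preimage continuous_Dq

lemma bound_D (q : ℂ × ℂ) (hq : q ∈ fermatDiscriminantLocus) :
    normSq q.1 + normSq q.2 ≤ 2 := by
  obtain ⟨w1, w2, hw, hf, hg⟩ := mem_imp_pair q hq
  have h1 := normSq_ff_gg w1 w2
  rw [← hf, ← hg, normSq_ff_gg] at h1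
  have h2 : normSq (-(q.1 * w1 - (starRingEnd ℂ) q.2 * w2)) +
      normSq (-(q.2 * w1 + (starRingEnd ℂ) q.1 * w2)) =
      (normSq q.1 + normSq q.2) * (normSq w1 + normSq w2) := by
    simp only [normSq_apply, add_re, add_im, sub_re, sub_im, mul_re, mul_im,
      neg_re, neg_im, conj_re, conj_im]
    ring
  have hpos : 0 < normSq w1 + normSq w2 := by
    rcases hw with h | h
    · have := normSq_pos.2 h
      have := normSq_nonneg w2
      positivity
    · have := normSq_pos.2 h
      have := normSq_nonneg w1
      positivity
  generalize -(q.1 * w1 - (starRingEnd ℂ) q.2 * w2) = u1 at *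
  generalize -(q.2 * w1 + (starRingEnd ℂ) q.1 * w2) = u2 at *
  have a1 := normSq_nonneg u1
  have a2 := normSq_nonneg u2
  have a3 := normSq_nonneg w1
  have a4 := normSq_nonneg w2
  by_contra hcon
  push Not at hcon
  set s := normSq u1 + normSq u2
  set t := normSq w1 + normSq w2
  have b1 : s ^ 2 / 2 ≤ normSq u1 ^ 2 + normSq u2 ^ 2 := by
    nlinarith [sq_nonneg (normSq u1 - normSq u2)]
  have b2 : normSq w1 ^ 2 + normSq w2 ^ 2 ≤ t ^ 2 := by
    nlinarith [mul_nonneg a3 a4]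
  have hst : 2 * t < s := by rw [h2]; nlinarith
  have hs : 0 < s := by linarith
  have c1 : s * (s ^ 2 / 2) ≤ t * t ^ 2 := by
    calc s * (s ^ 2 / 2) ≤ s * (normSq u1 ^ 2 + normSq u2 ^ 2) := by gcongr
      _ = _ := h1
      _ ≤ t * t ^ 2 := by gcongr
  have c2 : (2 * t) ^ 2 < s ^ 2 := by gcongr
  nlinarith [mul_pos hpos (mul_pos hpos hpos)]

lemma isCompact_D : IsCompact fermatDiscriminantLocus := by
  apply Metric.isCompact_of_isClosed_isBounded isClosed_D
  rw [isBounded_iff_forall_norm_le]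
  refine ⟨2, fun q hq => ?_⟩
  have h := bound_D q hq
  rw [normSq_eq_norm_sq, normSq_eq_norm_sq] at h
  rw [Prod.norm_def]
  apply max_le
  · nlinarith [norm_nonneg q.1, norm_nonneg q.2]
  · nlinarith [norm_nonneg q.1, norm_nonneg q.2]

/-- the base component -/
def CC : Set (ℂ × ℂ) := connectedComponentIn fermatDiscriminantLocus (0, 1)

lemma base_mem : ((0, 1) : ℂ × ℂ) ∈ fermatDiscriminantLocus := by
  rw [mem_iff]; simp [Dq, disc]

lemma base_CC : ((0, 1) : ℂ × ℂ) ∈ CC := mem_connectedComponentIn base_mem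

lemma CC_sub {P : Set (ℂ × ℂ)} (hP : IsPreconnected P) (hPD : P ⊆ fermatDiscriminantLocus)
    {x : ℂ × ℂ} (hx : x ∈ P) (hxC : x ∈ CC) : P ⊆ CC := by
  have := hP.subset_connectedComponentIn hx hPD
  rwa [← connectedComponentIn_eq hxC] at this

lemma CC_subset_D : CC ⊆ fermatDiscriminantLocus := connectedComponentIn_subset _ _

lemma CC_sym (σ : ℂ × ℂ → ℂ × ℂ) (hc : Continuous σ)
    (hD : ∀ q ∈ fermatDiscriminantLocus, σ q ∈ fermatDiscriminantLocus)
    (p : ℂ × ℂ) (hp : p ∈ CC) (hσ : σ p ∈ CC) (q : ℂ × ℂ) (hq : q ∈ CC) : σ q ∈ CC := by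
  have : σ '' CC ⊆ CC := by
    apply CC_sub (isPreconnected_connectedComponentIn.image σ hc.continuousOn) _
      (Set.mem_image_of_mem σ hp) hσ
    rintro _ ⟨y, hy, rfl⟩
    exact hD y (CC_subset_D hy)
  exact this ⟨q, hq, rfl⟩

lemma CC_path (γ : ℝ → ℂ × ℂ) (a b : ℝ) (hc : ContinuousOn γ (Set.Icc a b))
    (hD : ∀ t ∈ Set.Icc a b, γ t ∈ fermatDiscriminantLocus) (t0 : ℝ) (h0 : t0 ∈ Set.Icc a b)
    (hC : γ t0 ∈ CC) (t : ℝ) (ht : t ∈ Set.Icc a b) : γ t ∈ CC := by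
  have : γ '' Set.Icc a b ⊆ CC := by
    apply CC_sub (isPreconnected_Icc.image γ hc) _ (Set.mem_image_of_mem γ h0) hC
    rintro _ ⟨y, hy, rfl⟩
    exact hD y hy
  exact this ⟨t, ht, rfl⟩

lemma conj_of_pow {w : ℂ} {n : ℕ} (h : w ^ n = 1) (hn : n ≠ 0) :
    w * (starRingEnd ℂ) w = 1 := by
  have := Complex.norm_eq_one_of_pow_eq_one h hn
  rw [Complex.mul_conj, normSq_eq_norm_sq, this]; simp

lemma conj_of_cube {w : ℂ} (h : w ^ 3 = 1) : (starRingEnd ℂ) w = w ^ 2 := by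
  have h1 := conj_of_pow h (by norm_num)
  linear_combination w ^ 2 * h1 - (starRingEnd ℂ) w * h

lemma disc_rot (a b c d w : ℂ) (h : w ^ 3 = 1) :
    disc a (w ^ 2 * b) (w * c) d = disc a b c d := by
  unfold disc
  grind

lemma rot1_D (w : ℂ) (h : w ^ 3 = 1) (q : ℂ × ℂ) (hq : q ∈ fermatDiscriminantLocus) :
    (w * q.1, q.2) ∈ fermatDiscriminantLocus := by
  rw [mem_iff] at hq ⊢
  unfold Dq at hq ⊢
  simp only [map_mul, conj_of_cube h]
  rw [← disc_rot _ _ _ _ w h] at hq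
  convert hq using 2 <;> grind

lemma rot2_D (w : ℂ) (h : w ^ 3 = 1) (q : ℂ × ℂ) (hq : q ∈ fermatDiscriminantLocus) :
    (q.1, w * q.2) ∈ fermatDiscriminantLocus := by
  rw [mem_iff] at hq ⊢
  unfold Dq at hq ⊢
  simp only [map_mul, conj_of_cube h]
  rw [← disc_rot _ _ _ _ w h] at hq
  convert hq using 2 <;> grind

lemma conj_D (q : ℂ × ℂ) (hq : q ∈ fermatDiscriminantLocus) :
    ((starRingEnd ℂ) q.1, (starRingEnd ℂ) q.2) ∈ fermatDiscriminantLocus := by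
  rw [mem_iff] at hq ⊢
  have := congrArg (starRingEnd ℂ) hq
  unfold Dq disc at this ⊢
  simp only [map_add, map_sub, map_mul, map_pow, map_neg, map_one, map_zero, map_ofNat,
    Complex.conj_conj] at this ⊢
  linear_combination this

lemma neg_D (q : ℂ × ℂ) (hq : q ∈ fermatDiscriminantLocus) :
    (q.1, -q.2) ∈ fermatDiscriminantLocus := by
  rw [mem_iff] at hq ⊢
  have := congrArg (starRingEnd ℂ) hq
  unfold Dq disc at this ⊢
  simp only [map_add, map_sub, map_mul, map_pow, map_neg, map_one, map_zero, map_ofNat,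
    Complex.conj_conj] at this ⊢
  linear_combination this

lemma rot6_D (m : ℂ) (h : m ^ 6 = 1) (q : ℂ × ℂ) (hq : q ∈ fermatDiscriminantLocus) :
    (q.1, m * q.2) ∈ fermatDiscriminantLocus := by
  have : (m ^ 3 - 1) * (m ^ 3 + 1) = 0 := by linear_combination h
  rcases mul_eq_zero.1 this with h1 | h1
  · exact rot2_D m (by linear_combination h1) q hq
  · have := neg_D _ (rot2_D (-m) (by linear_combination -h1) q hq)
    simpa using this

lemma CC_rot1 (w : ℂ) (h : w ^ 3 = 1) (q : ℂ × ℂ) (hq : q ∈ CC) : (w * q.1, q.2) ∈ CC :=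
  CC_sym (fun q => (w * q.1, q.2)) (by fun_prop) (rot1_D w h) (0, 1) base_CC
    (by simpa using base_CC) q hq

lemma CC_conj (q : ℂ × ℂ) (hq : q ∈ CC) :
    ((starRingEnd ℂ) q.1, (starRingEnd ℂ) q.2) ∈ CC :=
  CC_sym (fun q => ((starRingEnd ℂ) q.1, (starRingEnd ℂ) q.2))
    (by
      have : Continuous (fun z : ℂ => (starRingEnd ℂ) z) := Complex.continuous_conj
      fun_prop) conj_D (0, 1) base_CC
    (by simpa using base_CC) q hq

lemma Dq_real (p z zb : ℂ) (h : z * zb = 1 - p ^ 2) :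
    disc (p ^ 3 + z ^ 3 + 1) (- p ^ 2 * zb + z ^ 2 * p) (p * zb ^ 2 + z * p ^ 2)
     (- zb ^ 3 + p ^ 3 + 1) = 4 * p ^ 3 * (2 - p) * (1 + p) ^ 2 + (z ^ 3 - zb ^ 3) ^ 2 := by
  have e1 : (p ^ 3 + z ^ 3 + 1) * (- zb ^ 3 + p ^ 3 + 1) -
    (- p ^ 2 * zb + z ^ 2 * p) * (p * zb ^ 2 + z * p ^ 2) =
      2 * p ^ 2 * (1 + p) + (z ^ 3 - zb ^ 3) := by grind
  have e2 : (p ^ 3 + z ^ 3 + 1) * (p * zb ^ 2 + z * p ^ 2) - (- p ^ 2 * zb + z ^ 2 * p) ^ 2 =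
      p * (zb ^ 2 + (1 + p) * z) := by grind
  have e3 : (- p ^ 2 * zb + z ^ 2 * p) * (- zb ^ 3 + p ^ 3 + 1) - (p * zb ^ 2 + z * p ^ 2) ^ 2 =
      p * (z ^ 2 - (1 + p) * zb) := by grind
  unfold disc
  rw [e1, mul_assoc, e2, e3]
  grind

lemma Dq_imag (s z zb : ℂ) (h : z * zb = 1 - s ^ 2) :
    disc (z ^ 3 + (I * s) ^ 3 + 1) (- z ^ 2 * (-I * s) + (I * s) ^ 2 * zb)
      (z * (-I * s) ^ 2 + (I * s) * zb ^ 2)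
     (- (-I * s) ^ 3 + zb ^ 3 + 1) = ((z ^ 3 + zb ^ 3) + 2) ^ 2 - 4 * s ^ 4 * (3 - s ^ 2) := by
  have hI : I ^ 2 = -1 := I_sq
  generalize I = i at *
  unfold disc
  grind


/-- a polar-form cube root -/
noncomputable def cr (ν θ : ℝ) : ℂ := (ν : ℂ) * Complex.exp (((θ / 3 : ℝ) : ℂ) * I)

lemma cr_cube (ν θ : ℝ) : cr ν θ ^ 3 = ((ν ^ 3 : ℝ) : ℂ) * Complex.exp ((θ : ℂ) * I) := by
  unfold cr
  rw [mul_pow, ← Complex.exp_nat_mul]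
  push_cast
  congr 2
  ring

lemma cr_normSq (ν θ : ℝ) : normSq (cr ν θ) = ν ^ 2 := by
  unfold cr
  rw [normSq_eq_norm_sq, norm_mul, Complex.norm_exp_ofReal_mul_I]
  simp

lemma cr_cube_re (ν θ : ℝ) : (cr ν θ ^ 3).re = ν ^ 3 * Real.cos θ := by
  rw [cr_cube, Complex.re_ofReal_mul, Complex.exp_ofReal_mul_I_re]

lemma cr_cube_im (ν θ : ℝ) : (cr ν θ ^ 3).im = ν ^ 3 * Real.sin θ := by
  rw [cr_cube, Complex.im_ofReal_mul, Complex.exp_ofReal_mul_I_im]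

lemma mem_real_iff (p : ℝ) (z : ℂ) (hz : normSq z = 1 - p ^ 2) :
    (((p : ℂ), z) : ℂ × ℂ) ∈ fermatDiscriminantLocus ↔
      ((z ^ 3).im) ^ 2 = p ^ 3 * (2 - p) * (1 + p) ^ 2 := by
  rw [mem_iff]
  have h1 : z * (starRingEnd ℂ) z = 1 - (p : ℂ) ^ 2 := by
    rw [Complex.mul_conj, hz]; push_cast; ring
  have h2 := Dq_real p z _ h1
  have h3 : z ^ 3 - (starRingEnd ℂ) z ^ 3 = 2 * ((z ^ 3).im : ℂ) * I := by
    rw [← map_pow, Complex.sub_conj]; push_cast; ring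
  have h4 : Dq ((p : ℂ), z) =
      ((4 * (p ^ 3 * (2 - p) * (1 + p) ^ 2 - ((z ^ 3).im) ^ 2) : ℝ) : ℂ) := by
    unfold Dq
    simp only [Complex.conj_ofReal]
    rw [h2, h3, mul_pow, I_sq]
    push_cast
    ring
  rw [h4, Complex.ofReal_eq_zero]
  constructor <;> intro h <;> linarith

lemma mem_imag_iff (s : ℝ) (z : ℂ) (hz : normSq z = 1 - s ^ 2) :
    ((z, I * (s : ℂ)) : ℂ × ℂ) ∈ fermatDiscriminantLocus ↔
      ((z ^ 3).re + 1) ^ 2 = s ^ 4 * (3 - s ^ 2) := by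
  rw [mem_iff]
  have h1 : z * (starRingEnd ℂ) z = 1 - (s : ℂ) ^ 2 := by
    rw [Complex.mul_conj, hz]; push_cast; ring
  have h2 := Dq_imag s z _ h1
  have h3 : z ^ 3 + (starRingEnd ℂ) z ^ 3 = 2 * ((z ^ 3).re : ℂ) := by
    rw [← map_pow, Complex.add_conj]; push_cast; ring
  have h4 : Dq (z, I * (s : ℂ)) =
      ((4 * (((z ^ 3).re + 1) ^ 2 - s ^ 4 * (3 - s ^ 2)) : ℝ) : ℂ) := by
    unfold Dq
    simp only [Complex.conj_ofReal, map_mul, Complex.conj_I]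
    rw [h2, h3]
    push_cast
    ring
  rw [h4, Complex.ofReal_eq_zero]
  constructor <;> intro h <;> linarith

/-- imaginary part along the fourth path -/
noncomputable def Y4 (p : ℝ) : ℝ := √(p ^ 3 * (2 - p) * (1 + p) ^ 2)
/-- angle along the fourth path -/
noncomputable def th4 (p : ℝ) : ℝ := Real.arcsin (Y4 p / √(1 - p ^ 2) ^ 3)
/-- the fourth path -/
noncomputable def path4 (p : ℝ) : ℂ × ℂ := ((p : ℂ), cr √(1 - p ^ 2) (th4 p))

lemma sqrt_cube_sq {n : ℝ} (hn : 0 ≤ n) : (√n ^ 3) ^ 2 = n ^ 3 := by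
  rw [← pow_mul, mul_comm, pow_mul, Real.sq_sqrt hn]

lemma path4_im (p : ℝ) (h0 : 0 ≤ p) (h1 : p ≤ 1 / 2) :
    ((cr √(1 - p ^ 2) (th4 p)) ^ 3).im = Y4 p := by
  have hn : 0 < 1 - p ^ 2 := by nlinarith
  have hs : 0 < √(1 - p ^ 2) ^ 3 := by positivity
  have hY : 0 ≤ Y4 p := Real.sqrt_nonneg _
  have hle : Y4 p ≤ √(1 - p ^ 2) ^ 3 := by
    unfold Y4
    apply Real.sqrt_le_iff.2 ⟨hs.le, ?_⟩
    rw [sqrt_cube_sq hn.le]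
    have : (1 - p ^ 2) ^ 3 - p ^ 3 * (2 - p) * (1 + p) ^ 2 = (1 + p) ^ 2 * (1 - 2 * p) := by ring
    have : 0 ≤ (1 + p) ^ 2 * (1 - 2 * p) := mul_nonneg (sq_nonneg _) (by linarith)
    linarith
  rw [cr_cube_im, th4, Real.sin_arcsin]
  · field_simp
  · have : 0 ≤ Y4 p / √(1 - p ^ 2) ^ 3 := by positivity
    linarith
  · exact (div_le_one hs).2 hle

lemma path4_D (p : ℝ) (h0 : 0 ≤ p) (h1 : p ≤ 1 / 2) : path4 p ∈ fermatDiscriminantLocus := by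
  have hn : 0 < 1 - p ^ 2 := by nlinarith
  unfold path4
  rw [mem_real_iff, path4_im p h0 h1, Y4, Real.sq_sqrt]
  · apply mul_nonneg (mul_nonneg (by positivity) (by linarith)) (sq_nonneg _)
  · rw [cr_normSq, Real.sq_sqrt hn.le]

lemma path4_cont : ContinuousOn path4 (Set.Icc 0 (1 / 2)) := by
  unfold path4 cr th4 Y4
  have hne : ∀ p ∈ Set.Icc (0 : ℝ) (1 / 2), √(1 - p ^ 2) ^ 3 ≠ 0 := by
    intro p hp
    have hn : 0 < 1 - p ^ 2 := by nlinarith [hp.1, hp.2]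
    positivity
  have h1 : ContinuousOn (fun p : ℝ => √(p ^ 3 * (2 - p) * (1 + p) ^ 2) / √(1 - p ^ 2) ^ 3)
      (Set.Icc 0 (1 / 2)) := by
    apply ContinuousOn.div (by fun_prop) (by fun_prop) hne
  have h2 := Real.continuous_arcsin.comp_continuousOn h1
  simp only [Function.comp_def] at h2
  fun_prop

lemma path4_CC (p : ℝ) (h0 : 0 ≤ p) (h1 : p ≤ 1 / 2) : path4 p ∈ CC := by
  apply CC_path path4 0 (1 / 2) path4_cont (fun t ht => path4_D t ht.1 ht.2) 0 (by norm_num) _ p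
    ⟨h0, h1⟩
  have : path4 0 = (0, 1) := by simp [path4, th4, Y4, cr]
  rw [this]; exact base_CC

lemma th4_half : th4 (1 / 2) = Real.pi / 2 := by
  have : Y4 (1 / 2) / √(1 - (1 / 2) ^ 2) ^ 3 = 1 := by
    rw [div_eq_one_iff_eq (by positivity)]
    unfold Y4
    rw [Real.sqrt_eq_iff_eq_sq (by norm_num) (by positivity), sqrt_cube_sq (by norm_num)]
    norm_num
  rw [th4, this, Real.arcsin_one]

lemma CC_rot6_base (q : ℂ × ℂ) (hq : q ∈ CC) :
    (q.1, Complex.exp (2 * Real.pi * I / (6 : ℕ)) * q.2) ∈ CC := by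
  have hA := path4_CC (1 / 2) (by norm_num) le_rfl
  apply CC_sym (fun q => (q.1, Complex.exp (2 * Real.pi * I / (6 : ℕ)) * q.2)) (by fun_prop)
    (rot6_D _ ?_) _ (CC_conj _ hA) _ q hq
  · exact (Complex.isPrimitiveRoot_exp 6 (by norm_num)).pow_eq_one
  · convert hA using 1
    simp only [path4, th4_half, cr, Complex.conj_ofReal, map_mul]
    ext1
    · rfl
    · simp only
      rw [← Complex.exp_conj, mul_left_comm, ← Complex.exp_add]
      congr 2
      simp only [map_mul, Complex.conj_ofReal, Complex.conj_I]
      push_cast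
      ring

lemma CC_rot6 (m : ℂ) (h : m ^ 6 = 1) (q : ℂ × ℂ) (hq : q ∈ CC) : (q.1, m * q.2) ∈ CC := by
  obtain ⟨k, hk, rfl⟩ := (Complex.isPrimitiveRoot_exp 6 (by norm_num)).eq_pow_of_pow_eq_one h
  clear h hk
  induction k with
  | zero => simpa using hq
  | succ k ih =>
    have := CC_rot6_base _ ih
    simpa [pow_succ', mul_assoc] using this

/-- real part along the third path -/
noncomputable def X3 (s : ℝ) : ℝ := -1 + s ^ 2 * √(3 - s ^ 2)
/-- angle along the third path -/
noncomputable def th3 (s : ℝ) : ℝ := Real.arccos (X3 s / √(1 - s ^ 2) ^ 3)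
/-- the third path -/
noncomputable def path3 (s : ℝ) : ℂ × ℂ := (cr √(1 - s ^ 2) (th3 s), I * (s : ℂ))

lemma path3_re (s : ℝ) (h1 : s ^ 2 ≤ 3 / 4) :
    ((cr √(1 - s ^ 2) (th3 s)) ^ 3).re = X3 s := by
  have hn : 0 < 1 - s ^ 2 := by nlinarith
  have hs : 0 < √(1 - s ^ 2) ^ 3 := by positivity
  have hle : |X3 s| ≤ √(1 - s ^ 2) ^ 3 := by
    apply abs_le_of_sq_le_sq _ hs.le
    rw [sqrt_cube_sq hn.le]
    have ht : √(3 - s ^ 2) ^ 2 = 3 - s ^ 2 := Real.sq_sqrt (by linarith)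
    have ht2 : 3 / 2 ≤ √(3 - s ^ 2) := Real.le_sqrt_of_sq_le (by linarith)
    unfold X3
    have : (1 - s ^ 2) ^ 3 - (-1 + s ^ 2 * √(3 - s ^ 2)) ^ 2 =
      s ^ 2 * (2 * √(3 - s ^ 2) - 3) := by linear_combination -s ^ 4 * ht
    nlinarith [mul_nonneg (sq_nonneg s) (by linarith : 0 ≤ 2 * √(3 - s ^ 2) - 3)]
  rw [abs_le] at hle
  rw [cr_cube_re, th3, Real.cos_arccos]
  · field_simp
  · rw [le_div_iff₀ hs]; linarith
  · exact (div_le_one hs).2 hle.2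

lemma path3_D (s : ℝ) (h1 : s ^ 2 ≤ 3 / 4) : path3 s ∈ fermatDiscriminantLocus := by
  have hn : 0 < 1 - s ^ 2 := by nlinarith
  have ht : √(3 - s ^ 2) ^ 2 = 3 - s ^ 2 := Real.sq_sqrt (by linarith)
  unfold path3
  rw [mem_imag_iff, path3_re s h1, X3]
  · linear_combination s ^ 4 * ht
  · rw [cr_normSq, Real.sq_sqrt hn.le]

lemma s_sq_le {s : ℝ} (hs : s ∈ Set.Icc (0 : ℝ) (√3 / 2)) : s ^ 2 ≤ 3 / 4 := by
  have h3 : √3 ^ 2 = 3 := Real.sq_sqrt (by norm_num)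
  nlinarith [hs.1, hs.2]

lemma path3_cont : ContinuousOn path3 (Set.Icc 0 (√3 / 2)) := by
  unfold path3 cr th3 X3
  have hne : ∀ p ∈ Set.Icc (0 : ℝ) (√3 / 2), √(1 - p ^ 2) ^ 3 ≠ 0 := by
    intro p hp
    have hn : 0 < 1 - p ^ 2 := by linarith [s_sq_le hp]
    positivity
  have h1 : ContinuousOn (fun s : ℝ => (-1 + s ^ 2 * √(3 - s ^ 2)) / √(1 - s ^ 2) ^ 3)
      (Set.Icc 0 (√3 / 2)) := by
    apply ContinuousOn.div (by fun_prop) (by fun_prop) hne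
  have h2 := Real.continuous_arccos.comp_continuousOn h1
  simp only [Function.comp_def] at h2
  fun_prop

lemma path3_CC (s : ℝ) (hs : s ∈ Set.Icc (0 : ℝ) (√3 / 2)) : path3 s ∈ CC := by
  apply CC_path path3 0 (√3 / 2) path3_cont (fun t ht => path3_D t (s_sq_le ht)) (√3 / 2)
    ⟨by positivity, le_rfl⟩ _ s hs
  have h3 : √3 ^ 2 = 3 := Real.sq_sqrt (by norm_num)
  have e1 : √(1 - (√3 / 2) ^ 2) = 1 / 2 := by
    rw [div_pow, h3, Real.sqrt_eq_iff_eq_sq] <;> norm_num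
  have e2 : √(3 - (√3 / 2) ^ 2) = 3 / 2 := by
    rw [div_pow, h3, Real.sqrt_eq_iff_eq_sq] <;> norm_num
  have e3 : th3 (√3 / 2) = 0 := by
    rw [th3, X3, e1, e2, div_pow, h3]; norm_num
  have e4 : √(1 - (1 / 2 : ℝ) ^ 2) = √3 / 2 := by
    rw [Real.sqrt_eq_iff_eq_sq (by norm_num) (by positivity), div_pow (√3), h3]; norm_num
  have hA := CC_rot6_base _ (path4_CC (1 / 2) (by norm_num) le_rfl)
  convert hA using 1
  simp only [path3, path4, th4_half, e3, e1, cr, e4]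
  ext1
  · simp
  · simp only
    rw [mul_left_comm, ← Complex.exp_add]
    have : (2 * (Real.pi : ℂ) * I / (6 : ℕ) + ((Real.pi / 2 / 3 : ℝ) : ℂ) * I) =
      Real.pi / 2 * I := by push_cast; ring
    rw [this, Complex.exp_pi_div_two_mul_I, mul_comm]

lemma cube_ratio {z y : ℂ} (h : z ^ 3 = y ^ 3) (hy : y ≠ 0) : ∃ w : ℂ, w ^ 3 = 1 ∧ z = w * y :=
  ⟨z / y, by rw [div_pow, h, div_self (pow_ne_zero _ hy)], by field_simp⟩

lemma six_ratio {z y : ℂ} (h : z ^ 6 = y ^ 6) (hy : y ≠ 0) : ∃ w : ℂ, w ^ 6 = 1 ∧ z = w * y :=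
  ⟨z / y, by rw [div_pow, h, div_self (pow_ne_zero _ hy)], by field_simp⟩

lemma ne_zero_of_normSq {z : ℂ} {n : ℝ} (h : normSq z = n) (hn : 0 < n) : z ≠ 0 := by
  rintro rfl; simp at h; linarith

/-- the unit points with imaginary second coordinate -/
lemma unit_imag (s : ℝ) (hs : 0 ≤ s) (z : ℂ) (hz : normSq z = 1 - s ^ 2)
    (hD : ((z, I * (s : ℂ)) : ℂ × ℂ) ∈ fermatDiscriminantLocus) :
    ((z, I * (s : ℂ)) : ℂ × ℂ) ∈ CC := by
  have h := (mem_imag_iff s z hz).1 hD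
  have hn : 0 ≤ 1 - s ^ 2 := by rw [← hz]; exact normSq_nonneg _
  have hc : normSq (z ^ 3) = (1 - s ^ 2) ^ 3 := by rw [map_pow, hz]
  rw [normSq_apply] at hc
  set X := (z ^ 3).re
  have ht : √(3 - s ^ 2) ^ 2 = 3 - s ^ 2 := Real.sq_sqrt (by linarith)
  have ht0 : 0 < √(3 - s ^ 2) := Real.sqrt_pos.2 (by linarith)
  have hX2 : X ^ 2 ≤ (1 - s ^ 2) ^ 3 := by nlinarith [mul_self_nonneg (z ^ 3).im]
  have hfac : (X + 1 - s ^ 2 * √(3 - s ^ 2)) * (X + 1 + s ^ 2 * √(3 - s ^ 2)) = 0 := by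
    linear_combination h - s ^ 4 * ht
  have hkey : s ^ 2 ≤ 3 / 4 ∧ X = X3 s := by
    rcases mul_eq_zero.1 hfac with h1 | h1
    · have hX : X = X3 s := by unfold X3; linarith
      refine ⟨?_, hX⟩
      by_contra hcon
      push Not at hcon
      have hXe : X = -1 + s ^ 2 * √(3 - s ^ 2) := by linarith
      rw [hXe] at hX2
      have : (1 - s ^ 2) ^ 3 - (-1 + s ^ 2 * √(3 - s ^ 2)) ^ 2 =
        s ^ 2 * (2 * √(3 - s ^ 2) - 3) := by linear_combination -s ^ 4 * ht
      have hlt : √(3 - s ^ 2) < 3 / 2 := by nlinarith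
      nlinarith
    · have hXe : X = -1 - s ^ 2 * √(3 - s ^ 2) := by linarith
      rw [hXe] at hX2
      have : (1 - s ^ 2) ^ 3 - (-1 - s ^ 2 * √(3 - s ^ 2)) ^ 2 =
        - (s ^ 2 * (2 * √(3 - s ^ 2) + 3)) := by linear_combination -s ^ 4 * ht
      have hs0 : s ^ 2 = 0 := by nlinarith [sq_nonneg s]
      refine ⟨by linarith, ?_⟩
      rw [hXe, X3, hs0]; ring
  obtain ⟨hs2, hX⟩ := hkey
  have hmem : s ∈ Set.Icc (0 : ℝ) (√3 / 2) := by
    refine ⟨hs, ?_⟩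
    have h3 : √3 ^ 2 = 3 := Real.sq_sqrt (by norm_num)
    have h30 : 0 < √3 := by positivity
    nlinarith
  have hP := path3_CC s hmem
  have hre := path3_re s hs2
  set y := cr √(1 - s ^ 2) (th3 s) with hy
  have hyn : normSq y = 1 - s ^ 2 := by rw [hy, cr_normSq, Real.sq_sqrt hn]
  have hy0 : y ≠ 0 := ne_zero_of_normSq hyn (by linarith)
  have hyc : normSq (y ^ 3) = (1 - s ^ 2) ^ 3 := by rw [map_pow, hyn]
  rw [normSq_apply, hre] at hyc
  have him : ((z ^ 3).im - (y ^ 3).im) * ((z ^ 3).im + (y ^ 3).im) = 0 := by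
    rw [hX] at hc; linear_combination hc - hyc
  rcases mul_eq_zero.1 him with h1 | h1
  · have : z ^ 3 = y ^ 3 := by
      apply Complex.ext
      · rw [hre]; exact hX
      · linarith
    obtain ⟨w, hw, rfl⟩ := cube_ratio this hy0
    exact CC_rot1 w hw _ hP
  · have : z ^ 3 = ((starRingEnd ℂ) y) ^ 3 := by
      rw [← map_pow]
      apply Complex.ext
      · rw [conj_re, hre]; exact hX
      · rw [conj_im]; linarith
    obtain ⟨w, hw, rfl⟩ := cube_ratio this (by simpa using hy0)
    have h2 := CC_rot6 (-1) (by norm_num) _ (CC_rot1 w hw _ (CC_conj _ hP))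
    simpa [path3, ← hy] using h2

lemma diag_CC (z : ℂ) (hz : z ^ 3 = -1) : ((z, 0) : ℂ × ℂ) ∈ CC := by
  have h0 : Dq (z, 0) = 0 := by
    simp [Dq, disc, hz]
  have hn : normSq z = 1 := by
    have : (-z) ^ 3 = 1 := by rw [neg_pow, hz]; norm_num
    have := Complex.norm_eq_one_of_pow_eq_one this (by norm_num)
    rw [normSq_eq_norm_sq]; rw [norm_neg] at this; rw [this]; norm_num
  have := unit_imag 0 le_rfl z (by simp [hn]) (by rw [mem_iff]; simpa using h0)
  simpa using this

/-- the unit points with real first coordinate -/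
lemma unit_real (p : ℝ) (z : ℂ) (hz : normSq z = 1 - p ^ 2)
    (hD : (((p : ℂ), z) : ℂ × ℂ) ∈ fermatDiscriminantLocus) :
    (((p : ℂ), z) : ℂ × ℂ) ∈ CC := by
  have h := (mem_real_iff p z hz).1 hD
  have hn : 0 ≤ 1 - p ^ 2 := by rw [← hz]; exact normSq_nonneg _
  have hc : normSq (z ^ 3) = (1 - p ^ 2) ^ 3 := by rw [map_pow, hz]
  rw [normSq_apply] at hc
  by_cases hp1 : p = -1
  · have hz0 : z = 0 := by rw [← normSq_eq_zero, hz, hp1]; norm_num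
    rw [hz0, hp1]
    apply diag_CC; push_cast; norm_num
  have hpl : -1 < p := by
    rcases lt_or_eq_of_le (by nlinarith : -1 ≤ p) with h | h
    · exact h
    · exact absurd h.symm hp1
  have hpu : p ≤ 1 := by nlinarith
  have h12 : 0 < (1 + p) ^ 2 := by have : 0 < 1 + p := by linarith
                                   positivity
  have hp0 : 0 ≤ p := by
    by_contra hcon
    push Not at hcon
    have : p ^ 3 < 0 := by
      have := pow_pos (neg_pos.2 hcon) 3
      nlinarith
    have h5 : p ^ 3 * ((2 - p) * (1 + p) ^ 2) < 0 :=
      mul_neg_of_neg_of_pos this (mul_pos (by linarith) h12)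
    nlinarith [sq_nonneg (z ^ 3).im]
  have hph : p ≤ 1 / 2 := by
    have h6 : p ^ 3 * (2 - p) * (1 + p) ^ 2 ≤ (1 - p ^ 2) ^ 3 := by
      nlinarith [mul_self_nonneg (z ^ 3).re]
    have : (1 - p ^ 2) ^ 3 - p ^ 3 * (2 - p) * (1 + p) ^ 2 = (1 + p) ^ 2 * (1 - 2 * p) := by ring
    have : 0 ≤ (1 + p) ^ 2 * (1 - 2 * p) := by linarith
    have := nonneg_of_mul_nonneg_right this h12
    linarith
  have hP := path4_CC p hp0 hph
  have him := path4_im p hp0 hph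
  set y := cr √(1 - p ^ 2) (th4 p) with hy
  have hyn : normSq y = 1 - p ^ 2 := by rw [hy, cr_normSq, Real.sq_sqrt hn]
  have hy0 : y ≠ 0 := ne_zero_of_normSq hyn (by nlinarith)
  have hyc : normSq (y ^ 3) = (1 - p ^ 2) ^ 3 := by rw [map_pow, hyn]
  have hyD := (mem_real_iff p y hyn).1 (path4_D p hp0 hph)
  rw [normSq_apply] at hyc
  have him2 : ((z ^ 3).im - (y ^ 3).im) * ((z ^ 3).im + (y ^ 3).im) = 0 := by
    linear_combination h - hyD
  have hre2 : ((z ^ 3).re - (y ^ 3).re) * ((z ^ 3).re + (y ^ 3).re) = 0 := by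
    linear_combination hc - hyc - him2
  have hcase : z ^ 6 = y ^ 6 ∨ z ^ 6 = ((starRingEnd ℂ) y) ^ 6 := by
    have e6 : ∀ x : ℂ, x ^ 6 = (x ^ 3) ^ 2 := fun x => by ring
    rw [e6 z, e6 y, e6 ((starRingEnd ℂ) y), ← map_pow]
    generalize z ^ 3 = Z at *
    generalize y ^ 3 = W at *
    rcases mul_eq_zero.1 him2 with h1 | h1 <;> rcases mul_eq_zero.1 hre2 with h2 | h2
    · left; congr 1; apply Complex.ext <;> linarith
    · right
      have : Z = -(starRingEnd ℂ) W := by apply Complex.ext <;> simp <;> linarith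
      rw [this]; ring
    · right
      have : Z = (starRingEnd ℂ) W := by apply Complex.ext <;> simp <;> linarith
      rw [this]
    · left
      have : Z = -W := by apply Complex.ext <;> simp <;> linarith
      rw [this]; ring
  rcases hcase with h1 | h1
  · obtain ⟨w, hw, rfl⟩ := six_ratio h1 hy0
    exact CC_rot6 w hw _ hP
  · obtain ⟨w, hw, rfl⟩ := six_ratio h1 (by simpa using hy0)
    have := CC_rot6 w hw _ (CC_conj _ hP)
    simpa [path4, ← hy] using this

lemma unit_real' (q : ℂ × ℂ) (hD : q ∈ fermatDiscriminantLocus)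
    (hn : normSq q.1 + normSq q.2 = 1) (w : ℂ) (hw : w ^ 3 = 1) (p : ℝ) (hp : q.1 = w * p) :
    q ∈ CC := by
  obtain ⟨q1, q2⟩ := q
  simp only at hp hn
  subst hp
  have hw2 := conj_of_cube hw
  have hw1 : normSq w = 1 := by
    have := conj_of_pow hw (by norm_num)
    rw [Complex.mul_conj] at this; exact_mod_cast this
  rw [map_mul, hw1, normSq_ofReal] at hn
  have h1 := rot1_D (w ^ 2) (by rw [← pow_mul, mul_comm, pow_mul, hw, one_pow]) _ hD
  have e : w ^ 2 * (w * (p : ℂ)) = p := by linear_combination (p : ℂ) * hw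
  simp only [e] at h1
  exact CC_rot1 w hw _ (unit_real p q2 (by linarith) h1)

lemma unit_imag' (q : ℂ × ℂ) (hD : q ∈ fermatDiscriminantLocus)
    (hn : normSq q.1 + normSq q.2 = 1) (w : ℂ) (hw : w ^ 3 = 1) (s : ℝ)
    (hs : q.2 = w * (I * s)) : q ∈ CC := by
  obtain ⟨q1, q2⟩ := q
  simp only at hs hn
  subst hs
  have hw1 : normSq w = 1 := by
    have := conj_of_pow hw (by norm_num)
    rw [Complex.mul_conj] at this; exact_mod_cast this
  rw [map_mul, map_mul, hw1, normSq_ofReal, normSq_I] at hn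
  have h1 := rot2_D (w ^ 2) (by rw [← pow_mul, mul_comm, pow_mul, hw, one_pow]) _ hD
  have e : w ^ 2 * (w * (I * (s : ℂ))) = I * s := by linear_combination I * (s : ℂ) * hw
  simp only [e] at h1
  have h6 : w ^ 6 = 1 := by rw [show 6 = 3 * 2 from rfl, pow_mul, hw, one_pow]
  rcases le_total 0 s with h | h
  · exact CC_rot6 w h6 _ (unit_imag s h q1 (by linarith) h1)
  · have h2 := neg_D _ h1
    have e2 : -(I * (s : ℂ)) = I * ((-s : ℝ) : ℂ) := by push_cast; ring
    simp only [e2] at h2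
    have := CC_rot6 (-w) (by rw [neg_pow, h6]; norm_num) _
      (unit_imag (-s) (by linarith) q1 (by nlinarith) h2)
    convert this using 2
    push_cast; ring


lemma real_path (a b c d : ℝ → ℝ) (ha : ContinuousOn a (Set.Icc 0 1))
    (hb : ContinuousOn b (Set.Icc 0 1)) (hc : ContinuousOn c (Set.Icc 0 1))
    (hd : ContinuousOn d (Set.Icc 0 1))
    (hne : ∀ t ∈ Set.Icc (0 : ℝ) 1, c t ≠ 0 ∨ d t ≠ 0)
    (hf : ∀ t ∈ Set.Icc (0 : ℝ) 1, a t ^ 3 + b t ^ 3 = c t ^ 3 + d t ^ 3)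
    (hg : ∀ t ∈ Set.Icc (0 : ℝ) 1, - a t ^ 2 * b t + b t ^ 2 * a t = - c t ^ 2 * d t + d t ^ 2 * c t)
    (h0 : (Q1 (a 0) (b 0) (c 0) (d 0), Q2 (a 0) (b 0) (c 0) (d 0)) ∈ CC) :
    (Q1 (a 1) (b 1) (c 1) (d 1), Q2 (a 1) (b 1) (c 1) (d 1)) ∈ CC := by
  apply CC_path (fun t => (Q1 (a t) (b t) (c t) (d t), Q2 (a t) (b t) (c t) (d t))) 0 1 _ _ 0
    (by norm_num) h0 1 (by norm_num)
  · have hN : ∀ t ∈ Set.Icc (0 : ℝ) 1, ((c t : ℂ) * c t + (d t : ℂ) * d t) ≠ 0 := by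
      intro t ht
      have := mul_conj_add_ne (c t) (d t) (by simpa using hne t ht)
      simpa using this
    unfold Q1 Q2
    simp only [Complex.conj_ofReal]
    apply ContinuousOn.prodMk <;> apply ContinuousOn.div _ _ hN <;> fun_prop
  · intro t ht
    apply Q_mem
    · simpa using hne t ht
    · unfold ff; exact_mod_cast hf t ht
    · unfold gg; simp only [Complex.conj_ofReal]; exact_mod_cast hg t ht

/-- real cube root -/
noncomputable def cbr (t : ℝ) : ℝ := t ^ (1 / 3 : ℝ)
lemma cbr_cube {t : ℝ} (h : 0 ≤ t) : cbr t ^ 3 = t := by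
  unfold cbr
  rw [← Real.rpow_natCast, ← Real.rpow_mul h]; norm_num
lemma cbr_cont : Continuous cbr := by
  unfold cbr
  exact Real.continuous_rpow_const (by norm_num)
lemma cbr_one : cbr 1 = 1 := by simp [cbr]

/-- the slope along the first path -/
noncomputable def z1 (x : ℝ) : ℝ :=
  -(2 * x * (1 - x)) / (x ^ 2 + 1 + √((x ^ 2 + 1) ^ 2 + 4 * x * (1 - x) ^ 2))

lemma z1_den (x : ℝ) : 0 < x ^ 2 + 1 + √((x ^ 2 + 1) ^ 2 + 4 * x * (1 - x) ^ 2) := by positivity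

lemma z1_cont : Continuous z1 := by
  unfold z1
  apply Continuous.div (by fun_prop) (by fun_prop) (fun x => (z1_den x).ne')

lemma z1_eq (x : ℝ) (h0 : 0 ≤ x) :
    z1 x ^ 2 * (x - 1) + z1 x * (x ^ 2 + 1) + x - x ^ 2 = 0 := by
  have hd := z1_den x
  have hs := Real.sq_sqrt (by positivity : 0 ≤ (x ^ 2 + 1) ^ 2 + 4 * x * (1 - x) ^ 2)
  unfold z1
  set s := √((x ^ 2 + 1) ^ 2 + 4 * x * (1 - x) ^ 2)
  field_simp
  linear_combination (x - x ^ 2) * hs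

lemma z1_gt (x : ℝ) (h0 : 0 ≤ x) (h1 : x ≤ 1) : -1 < z1 x := by
  have hd := z1_den x
  have hs := Real.sqrt_nonneg ((x ^ 2 + 1) ^ 2 + 4 * x * (1 - x) ^ 2)
  unfold z1
  rw [lt_div_iff₀ hd]
  nlinarith [sq_nonneg (3 * x - 1)]

lemma z1_cube (x : ℝ) (h0 : 0 ≤ x) (h1 : x ≤ 1) : 0 < 1 + z1 x ^ 3 := by
  have h := z1_gt x h0 h1
  have : 1 + z1 x ^ 3 = (1 + z1 x) * (1 - z1 x + z1 x ^ 2) := by ring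
  rw [this]
  apply mul_pos (by linarith); nlinarith [sq_nonneg (z1 x - 1 / 2)]

lemma z1_g (x : ℝ) (h0 : 0 ≤ x) :
    (1 + x ^ 3) * (z1 x ^ 2 - z1 x) = (1 + z1 x ^ 3) * (x - x ^ 2) := by
  linear_combination (x * z1 x - 1) * z1_eq x h0

/-- coordinates of the first path -/
noncomputable def pa (x : ℝ) : ℝ := x * cbr (1 + z1 x ^ 3)
/-- coordinates of the first path -/
noncomputable def pb (x : ℝ) : ℝ := cbr (1 + z1 x ^ 3)
/-- coordinates of the first path -/
noncomputable def pc (x : ℝ) : ℝ := cbr (1 + x ^ 3)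
/-- coordinates of the first path -/
noncomputable def pd (x : ℝ) : ℝ := z1 x * cbr (1 + x ^ 3)

lemma p_props (x : ℝ) (hx : x ∈ Set.Icc (0 : ℝ) 1) :
    pb x ≠ 0 ∧ pc x ≠ 0 ∧ pa x ^ 3 + pb x ^ 3 = pc x ^ 3 + pd x ^ 3 ∧
    - pa x ^ 2 * pb x + pb x ^ 2 * pa x = - pc x ^ 2 * pd x + pd x ^ 2 * pc x := by
  have h1 := z1_cube x hx.1 hx.2
  have h2 : 0 < 1 + x ^ 3 := by have := hx.1; positivity
  have e1 := cbr_cube h1.le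
  have e2 := cbr_cube h2.le
  have e3 := z1_g x hx.1
  unfold pa pb pc pd
  refine ⟨?_, ?_, ?_, ?_⟩
  · intro h; rw [h] at e1; norm_num at e1; linarith
  · intro h; rw [h] at e2; norm_num at e2; linarith
  · linear_combination (1 + x ^ 3) * e1 - (1 + z1 x ^ 3) * e2
  · linear_combination (x - x ^ 2) * e1 - (z1 x ^ 2 - z1 x) * e2 - e3

lemma pa_cont : Continuous pa := by
  unfold pa; have := cbr_cont; have := z1_cont; fun_prop
lemma pb_cont : Continuous pb := by
  unfold pb; have := cbr_cont; have := z1_cont; fun_prop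
lemma pc_cont : Continuous pc := by
  unfold pc; have := cbr_cont; have := z1_cont; fun_prop
lemma pd_cont : Continuous pd := by
  unfold pd; have := cbr_cont; have := z1_cont; fun_prop

lemma z1_zero : z1 0 = 0 := by simp [z1]
lemma z1_one : z1 1 = 0 := by simp [z1]

lemma end1 : ∃ q : ℂ × ℂ, q ∈ CC ∧ q.1 ^ 3 = - (1 / 4) ∧ q.2 ^ 3 = 1 / 4 := by
  have h := real_path pc pd pa pb pc_cont.continuousOn pd_cont.continuousOn pa_cont.continuousOn
    pb_cont.continuousOn (fun t ht => Or.inr (p_props t ht).1)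
    (fun t ht => (p_props t ht).2.2.1.symm) (fun t ht => (p_props t ht).2.2.2.symm) (by
      simp [pa, pb, pc, pd, z1_zero, cbr_one, Q1, Q2]
      exact base_CC)
  refine ⟨_, h, ?_, ?_⟩ <;>
  · have e := cbr_cube (by norm_num : (0 : ℝ) ≤ 2)
    have e' : ((cbr 2 : ℝ) : ℂ) ^ 3 = 2 := by exact_mod_cast e
    simp only [pa, pb, pc, pd, z1_one, Q1, Q2, Complex.conj_ofReal]
    norm_num [cbr_one]
    try rw [neg_div, neg_pow]
    rw [div_pow, e']; norm_num

lemma end2 : ∃ q : ℂ × ℂ, q ∈ CC ∧ q.1 ^ 3 = - (1 / 2) ∧ q.2 ^ 3 = - (1 / 2) := by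
  have h := real_path pa pb pc pd pa_cont.continuousOn pb_cont.continuousOn pc_cont.continuousOn
    pd_cont.continuousOn (fun t ht => Or.inl (p_props t ht).2.1)
    (fun t ht => (p_props t ht).2.2.1) (fun t ht => (p_props t ht).2.2.2) (by
      simp [pa, pb, pc, pd, z1_zero, cbr_one, Q1, Q2]
      simpa using CC_rot6 (-1) (by norm_num) _ base_CC)
  refine ⟨_, h, ?_, ?_⟩ <;>
  · have e := cbr_cube (by norm_num : (0 : ℝ) ≤ 2)
    have e' : ((cbr 2 : ℝ) : ℂ) ^ 3 = 2 := by exact_mod_cast e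
    have hne : ((cbr 2 : ℝ) : ℂ) ≠ 0 := by intro h; rw [h] at e'; norm_num at e'
    simp only [pa, pb, pc, pd, z1_one, Q1, Q2, Complex.conj_ofReal]
    norm_num [cbr_one]
    field_simp
    rw [e']

lemma end_CC (c : ℂ) (hc : c = 1 / 2 ∨ c = 1 / 4) (q : ℂ × ℂ) (h1 : q.1 ^ 3 = -c)
    (h2 : q.2 ^ 6 = c ^ 2) : q ∈ CC := by
  have : ∃ p : ℂ × ℂ, p ∈ CC ∧ p.1 ^ 3 = -c ∧ p.2 ^ 6 = c ^ 2 := by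
    rcases hc with rfl | rfl
    · obtain ⟨p, hp, e1, e2⟩ := end2
      exact ⟨p, hp, e1, by rw [show 6 = 3 * 2 from rfl, pow_mul, e2]; norm_num⟩
    · obtain ⟨p, hp, e1, e2⟩ := end1
      exact ⟨p, hp, e1, by rw [show 6 = 3 * 2 from rfl, pow_mul, e2]⟩
  have hc0 : c ≠ 0 := by rcases hc with rfl | rfl <;> norm_num
  obtain ⟨p, hp, e1, e2⟩ := this
  obtain ⟨q1, q2⟩ := q
  simp only at h1 h2
  have hp1 : p.1 ≠ 0 := by intro h; rw [h] at e1; apply hc0; simpa using e1.symm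
  have hp2 : p.2 ≠ 0 := by intro h; rw [h] at e2; apply hc0; simpa using e2.symm
  obtain ⟨w, hw, rfl⟩ := cube_ratio (h1.trans e1.symm) hp1
  obtain ⟨m, hm, rfl⟩ := six_ratio (h2.trans e2.symm) hp2
  exact CC_rot6 m hm _ (CC_rot1 w hw _ hp)

lemma Q_normSq (u1 u2 w1 w2 : ℂ) (hw : w1 ≠ 0 ∨ w2 ≠ 0)
    (h : normSq u1 + normSq u2 = normSq w1 + normSq w2) :
    normSq (Q1 u1 u2 w1 w2) + normSq (Q2 u1 u2 w1 w2) = 1 := by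
  have hN := mul_conj_add_ne w1 w2 hw
  have h' : u1 * (starRingEnd ℂ) u1 + u2 * (starRingEnd ℂ) u2 =
    w1 * (starRingEnd ℂ) w1 + w2 * (starRingEnd ℂ) w2 := by
    simp only [Complex.mul_conj]; exact_mod_cast h
  have : (((normSq (Q1 u1 u2 w1 w2) + normSq (Q2 u1 u2 w1 w2) : ℝ)) : ℂ) = 1 := by
    push_cast
    rw [← Complex.mul_conj, ← Complex.mul_conj]
    unfold Q1 Q2
    have hN2 : (starRingEnd ℂ) w1 * w1 + (starRingEnd ℂ) w2 * w2 =
      w1 * (starRingEnd ℂ) w1 + w2 * (starRingEnd ℂ) w2 := by ring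
    simp only [map_div₀, map_neg, map_add, map_sub, map_mul, Complex.conj_conj]
    rw [hN2, div_mul_div_comm, div_mul_div_comm, ← add_div, div_eq_one_iff_eq (mul_ne_zero hN hN)]
    linear_combination (w1 * (starRingEnd ℂ) w1 + w2 * (starRingEnd ℂ) w2) * h'
  exact_mod_cast this

lemma gg_zero_cases (w1 w2 : ℂ) (h : gg w1 w2 = 0) (hw : w1 ≠ 0 ∨ w2 ≠ 0) :
    (w1 ≠ 0 ∧ w2 = 0) ∨ (w1 = 0 ∧ w2 ≠ 0) ∨
      (w1 ≠ 0 ∧ ∃ η : ℂ, η ^ 3 = 1 ∧ w2 = η * w1) := by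
  by_cases h1 : w1 = 0
  · right; left; exact ⟨h1, hw.resolve_left (fun h => h h1)⟩
  by_cases h2 : w2 = 0
  · left; exact ⟨h1, h2⟩
  right; right
  refine ⟨h1, ?_⟩
  unfold gg at h
  have e : w2 ^ 2 * (starRingEnd ℂ) w1 = w1 ^ 2 * (starRingEnd ℂ) w2 := by linear_combination h
  have en := congrArg (fun z => ‖z‖) e
  simp only [norm_mul, norm_pow, RCLike.norm_conj] at en
  have p1 : 0 < ‖w1‖ := norm_pos_iff.2 h1
  have p2 : 0 < ‖w2‖ := norm_pos_iff.2 h2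
  have en2 : ‖w2‖ = ‖w1‖ := by
    have : ‖w2‖ * ‖w1‖ * (‖w2‖ - ‖w1‖) = 0 := by linear_combination en
    rcases mul_eq_zero.1 this with h | h
    · exact absurd h (by positivity)
    · linarith
  have e3 : w2 ^ 3 = w1 ^ 3 := by
    have c1 := Complex.mul_conj w1
    have c2 := Complex.mul_conj w2
    rw [normSq_eq_norm_sq] at c1 c2
    rw [en2] at c2
    have : w2 ^ 3 * ((‖w1‖ ^ 2 : ℝ) : ℂ) = w1 ^ 3 * ((‖w1‖ ^ 2 : ℝ) : ℂ) := by
      linear_combination w1 * w2 * e - w2 ^ 3 * c1 + w1 ^ 3 * c2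
    apply mul_right_cancel₀ _ this
    norm_cast
    positivity
  exact cube_ratio e3 h1

lemma conj_ne {z : ℂ} (h : z ≠ 0) : (starRingEnd ℂ) z ≠ 0 := by simpa using h

lemma g_zero_CC (u1 u2 w1 w2 : ℂ) (hw : w1 ≠ 0 ∨ w2 ≠ 0) (hf : ff u1 u2 = ff w1 w2)
    (hgu : gg u1 u2 = 0) (hgw : gg w1 w2 = 0) :
    (Q1 u1 u2 w1 w2, Q2 u1 u2 w1 w2) ∈ CC := by
  have hu : u1 ≠ 0 ∨ u2 ≠ 0 := by
    by_contra hcon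
    push Not at hcon
    have h1 := normSq_ff_gg w1 w2
    rw [← hf, hgw, hcon.1, hcon.2] at h1
    simp [ff] at h1
    have := normSq_nonneg w1
    have := normSq_nonneg w2
    rcases hw with h | h
    · have := normSq_pos.2 h
      rcases h1 with h1 | h1 <;> nlinarith
    · have := normSq_pos.2 h
      rcases h1 with h1 | h1 <;> nlinarith
  have hmem := Q_mem u1 u2 w1 w2 hw hf (hgu.trans hgw.symm)
  have hnorm := Q_normSq u1 u2 w1 w2 hw
  unfold ff at hf
  rcases gg_zero_cases w1 w2 hgw hw with ⟨hw1, rfl⟩ | ⟨rfl, hw2⟩ | ⟨hw1, η, hη, rfl⟩ <;>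
  rcases gg_zero_cases u1 u2 hgu hu with ⟨hu1, rfl⟩ | ⟨rfl, hu2⟩ | ⟨hu1, θ, hθ, rfl⟩
  · obtain ⟨e, he, rfl⟩ := cube_ratio (by linear_combination hf : u1 ^ 3 = w1 ^ 3) hw1
    have := conj_ne hw1
    convert diag_CC (-e) (by rw [neg_pow, he]; norm_num) using 2
    · simp [Q1]; field_simp
    · simp [Q2]
  · obtain ⟨e, he, rfl⟩ := cube_ratio (by linear_combination hf : u2 ^ 3 = w1 ^ 3) hw1
    have := conj_ne hw1
    convert CC_rot6 (-e) (by rw [neg_pow, show 6 = 3 * 2 from rfl, pow_mul e, he]; norm_num) _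
      base_CC using 2
    · simp [Q1]
    · simp [Q2]; field_simp
  · have := conj_ne hw1
    apply end_CC (1 / 2) (Or.inl rfl)
    · simp [Q1]; field_simp
      grind
    · simp [Q2]; field_simp
      grind
  · obtain ⟨e, he, rfl⟩ := cube_ratio (by linear_combination hf : u1 ^ 3 = w2 ^ 3) hw2
    have := conj_ne hw2
    have he' := conj_of_cube he
    convert CC_rot6 (e ^ 2) (by rw [← pow_mul, show 2 * 6 = 3 * 4 from rfl, pow_mul e, he]; norm_num) _
      base_CC using 2
    · simp [Q1]
    · simp [Q2, he']; field_simp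
  · obtain ⟨e, he, rfl⟩ := cube_ratio (by linear_combination hf : u2 ^ 3 = w2 ^ 3) hw2
    have := conj_ne hw2
    have he' := conj_of_cube he
    convert diag_CC (-e ^ 2) (by grind) using 2
    · simp [Q1, he']; field_simp
    · simp [Q2]
  · have h2 := conj_ne hw2
    have hf' := congrArg (starRingEnd ℂ) hf
    simp only [map_add, map_pow, map_mul, map_zero, conj_of_cube hθ] at hf'
    apply end_CC (1 / 2) (Or.inl rfl)
    · simp [Q1, conj_of_cube hθ]; field_simp
      grind
    · simp [Q2, conj_of_cube hθ]; field_simp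
      grind
  · have h2 := conj_ne hw1
    have hf' := congrArg (starRingEnd ℂ) hf
    simp only [map_add, map_pow, map_mul, map_zero, conj_of_cube hη] at hf'
    have hd : w1 * (starRingEnd ℂ) w1 + η * w1 * (η ^ 2 * (starRingEnd ℂ) w1)
      = 2 * (w1 * (starRingEnd ℂ) w1) := by linear_combination w1 * (starRingEnd ℂ) w1 * hη
    apply end_CC (1 / 4) (Or.inr rfl)
    · simp [Q1, conj_of_cube hη, hd]; field_simp
      grind
    · simp [Q2, conj_of_cube hη, hd]; field_simp
      grind
  · have h2 := conj_ne hw1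
    have hf' := congrArg (starRingEnd ℂ) hf
    simp only [map_add, map_pow, map_mul, map_zero, conj_of_cube hη] at hf'
    have hd : w1 * (starRingEnd ℂ) w1 + η * w1 * (η ^ 2 * (starRingEnd ℂ) w1)
      = 2 * (w1 * (starRingEnd ℂ) w1) := by linear_combination w1 * (starRingEnd ℂ) w1 * hη
    apply end_CC (1 / 4) (Or.inr rfl)
    · simp [Q1, conj_of_cube hη, hd]; field_simp
      grind
    · simp [Q2, conj_of_cube hη, hd]; field_simp
      grind
  · have h2 := conj_ne hw1
    obtain ⟨e, he, rfl⟩ := cube_ratio (by grind : u1 ^ 3 = w1 ^ 3) hw1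
    have n1 : ∀ {w : ℂ}, w ^ 3 = 1 → normSq w = 1 := by
      intro w hw
      have := conj_of_pow hw (by norm_num)
      rw [Complex.mul_conj] at this; exact_mod_cast this
    have hd : w1 * (starRingEnd ℂ) w1 + η * w1 * (η ^ 2 * (starRingEnd ℂ) w1)
      = 2 * (w1 * (starRingEnd ℂ) w1) := by linear_combination w1 * (starRingEnd ℂ) w1 * hη
    apply unit_real' _ hmem (hnorm (by simp [n1 he, n1 hη, n1 hθ])) (θ * η ^ 2) (by grind)
      (-(e * (starRingEnd ℂ) (θ * η ^ 2)).re)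
    have hr := Complex.add_conj (e * (starRingEnd ℂ) (θ * η ^ 2))
    simp only [map_mul, map_pow, conj_of_cube hη, conj_of_cube hθ, conj_of_cube he] at hr
    simp only [Q1, map_mul, map_pow, conj_of_cube hη, conj_of_cube hθ, conj_of_cube he, hd]
    push_cast at hr ⊢
    generalize (((e * (θ ^ 2 * (η ^ 2) ^ 2)).re : ℝ) : ℂ) = R at *
    field_simp
    have k1 : θ ^ 3 * η ^ 6 = 1 := by rw [hθ, show 6 = 3 * 2 from rfl, pow_mul, hη]; norm_num
    have k2 : θ ^ 3 * η ^ 9 = 1 := by rw [hθ, show 9 = 3 * 3 from rfl, pow_mul, hη]; norm_num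
    linear_combination -θ * η ^ 2 * hr + e * k1 + e ^ 2 * θ ^ 2 * η * k2

/-- critical vectors -/
def Crit (a b : ℂ) : Prop :=
  ‖a‖ ^ 4 + ‖b‖ ^ 4 = 2 * ‖a‖ * ‖b‖ * (‖a‖ ^ 2 + ‖b‖ ^ 2)

lemma crit_real (a b c d : ℝ) (ha : 0 ≤ a) (hb : 0 ≤ b) (hc : 0 ≤ c) (hd : 0 ≤ d)
    (h1 : a ^ 4 + b ^ 4 = 2 * a * b * (a ^ 2 + b ^ 2))
    (h2 : c ^ 4 + d ^ 4 = 2 * c * d * (c ^ 2 + d ^ 2))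
    (h3 : (a ^ 2 + b ^ 2) * (a ^ 4 + b ^ 4) = (c ^ 2 + d ^ 2) * (c ^ 4 + d ^ 4)) :
    (a = c ∧ b = d) ∨ (a = d ∧ b = c) := by
  have s3 : √3 ^ 2 = 3 := Real.sq_sqrt (by norm_num)
  have s30 : 0 ≤ √3 := Real.sqrt_nonneg _
  have key : ∀ x y : ℝ, 0 ≤ x → 0 ≤ y → x ^ 4 + y ^ 4 = 2 * x * y * (x ^ 2 + y ^ 2) →
      x ^ 2 + y ^ 2 = (1 + √3) * (x * y) := by
    intro x y hx hy h
    have hxy : 0 ≤ x * y := mul_nonneg hx hy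
    have e : (x ^ 2 + y ^ 2 - x * y) ^ 2 = (√3 * (x * y)) ^ 2 := by
      rw [mul_pow, s3]; linear_combination h
    have := (pow_left_inj₀ (by nlinarith [sq_nonneg (x - y)]) (by positivity) two_ne_zero).1 e
    linarith
  have k1 := key a b ha hb h1
  have k2 := key c d hc hd h2
  have k3 : (a * b) ^ 3 = (c * d) ^ 3 := by
    rw [h1, h2, k1, k2] at h3
    have : 2 * (1 + √3) ^ 2 * ((a * b) ^ 3) = 2 * (1 + √3) ^ 2 * ((c * d) ^ 3) := by
      linear_combination h3
    exact mul_left_cancel₀ (by positivity) this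
  have k4 : a * b = c * d :=
    (pow_left_inj₀ (by positivity) (by positivity) three_ne_zero).1 k3
  rw [k4, ← k2] at k1
  have k5 : a + b = c + d := by
    apply (pow_left_inj₀ (by positivity) (by positivity) two_ne_zero).1
    linear_combination k1 + 2 * k4
  have : (a - c) * (a - d) = 0 := by linear_combination a * k5 - k4
  rcases mul_eq_zero.1 this with h | h
  · left; constructor <;> linarith
  · right; constructor <;> linarith

lemma normSq_gg (a b : ℂ) : normSq (gg a b) =
    normSq a * normSq b * (normSq a + normSq b) - 2 * (a ^ 3 * (starRingEnd ℂ) b ^ 3).re := by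
  simp only [gg, normSq_apply, pow_succ, pow_zero, one_mul, add_re, add_im, mul_re, mul_im,
    neg_re, neg_im, conj_re, conj_im]
  ring

lemma unit_ratio {u w : ℂ} (h : ‖u‖ = ‖w‖) (hw : w ≠ 0) :
    ∃ e : ℂ, e * (starRingEnd ℂ) e = 1 ∧ u = e * w := by
  refine ⟨u / w, ?_, by field_simp⟩
  rw [Complex.mul_conj, normSq_eq_norm_sq, norm_div, h, div_self (norm_ne_zero_iff.2 hw)]
  simp

lemma gg_ne {a b : ℂ} (h : gg a b ≠ 0) : a ≠ 0 ∧ b ≠ 0 := by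
  constructor <;> rintro rfl <;> simp [gg] at h

lemma aux1 {e E f F : ℂ} (h1 : e * E = 1) (h2 : f * F = 1) (h3 : e ^ 3 * F ^ 3 = 1) :
    f ^ 2 * E = e ^ 2 * F := by
  linear_combination -f ^ 2 * E * h3 + f ^ 2 * e ^ 2 * F ^ 3 * h1 + e ^ 2 * F * (f * F + 1) * h2

lemma aux2 {e E f F : ℂ} (h1 : e * E = 1) (h2 : f * F = 1) (h3 : e ^ 3 * F ^ 3 = 1) :
    (f * E) ^ 3 = 1 := by
  have a : (e * E) ^ 3 = 1 := by rw [h1, one_pow]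
  have b : (f * F) ^ 3 = 1 := by rw [h2, one_pow]
  linear_combination - f ^ 3 * E ^ 3 * h3 + (f * F) ^ 3 * a + b

lemma unit_norm {e : ℂ} (h : e * (starRingEnd ℂ) e = 1) : normSq e = 1 := by
  rw [Complex.mul_conj] at h; exact_mod_cast h

lemma crit_CC (u1 u2 w1 w2 : ℂ) (hf : ff u1 u2 = ff w1 w2) (hg : gg u1 u2 = gg w1 w2)
    (hg0 : gg w1 w2 ≠ 0) (hu : Crit u1 u2) (hw : Crit w1 w2) :
    (Q1 u1 u2 w1 w2, Q2 u1 u2 w1 w2) ∈ CC := by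
  obtain ⟨hw1, hw2⟩ := gg_ne hg0
  have hmem := Q_mem u1 u2 w1 w2 (Or.inl hw1) hf hg
  have hnorm := Q_normSq u1 u2 w1 w2 (Or.inl hw1)
  have hN := mul_conj_add_ne w1 w2 (Or.inl hw1)
  have hn := normSq_ff_gg w1 w2
  rw [← hf, ← hg, normSq_ff_gg] at hn
  simp only [normSq_eq_norm_sq, ← pow_mul] at hn
  have hmod := crit_real _ _ _ _ (norm_nonneg u1) (norm_nonneg u2) (norm_nonneg w1)
    (norm_nonneg w2) hu hw hn
  have hre : (u1 ^ 3 * (starRingEnd ℂ) u2 ^ 3).re = (w1 ^ 3 * (starRingEnd ℂ) w2 ^ 3).re := by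
    have a := normSq_gg u1 u2
    have b := normSq_gg w1 w2
    rw [hg, b] at a
    simp only [normSq_eq_norm_sq] at a
    rcases hmod with ⟨x, y⟩ | ⟨x, y⟩ <;> rw [x, y] at a <;> linarith
  have hZn : normSq (u1 ^ 3 * (starRingEnd ℂ) u2 ^ 3) = normSq (w1 ^ 3 * (starRingEnd ℂ) w2 ^ 3) := by
    simp only [normSq_eq_norm_sq, norm_mul, norm_pow, RCLike.norm_conj]
    rcases hmod with ⟨x, y⟩ | ⟨x, y⟩ <;> rw [x, y]
    ring
  have hZ0 : w1 ^ 3 * (starRingEnd ℂ) w2 ^ 3 ≠ 0 :=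
    mul_ne_zero (pow_ne_zero _ hw1) (pow_ne_zero _ (conj_ne hw2))
  have hZ : u1 ^ 3 * (starRingEnd ℂ) u2 ^ 3 = w1 ^ 3 * (starRingEnd ℂ) w2 ^ 3 ∨
      u1 ^ 3 * (starRingEnd ℂ) u2 ^ 3 = (starRingEnd ℂ) (w1 ^ 3 * (starRingEnd ℂ) w2 ^ 3) := by
    generalize u1 ^ 3 * (starRingEnd ℂ) u2 ^ 3 = A at *
    generalize w1 ^ 3 * (starRingEnd ℂ) w2 ^ 3 = B at *
    rw [normSq_apply, normSq_apply, hre] at hZn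
    have : (A.im - B.im) * (A.im + B.im) = 0 := by linear_combination hZn
    rcases mul_eq_zero.1 this with h | h
    · left; apply Complex.ext; exacts [hre, by linarith]
    · right; apply Complex.ext; exacts [by simpa using hre, by simp; linarith]
  have hZ0' := conj_ne hZ0
  have cw : ∀ z : ℂ, ‖(starRingEnd ℂ) z‖ = ‖z‖ := fun z => RCLike.norm_conj z
  have hNr : w1 * (starRingEnd ℂ) w1 + w2 * (starRingEnd ℂ) w2 =
      ((normSq w1 + normSq w2 : ℝ) : ℂ) := by
    push_cast; rw [Complex.mul_conj, Complex.mul_conj]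
  rcases hmod with ⟨x, y⟩ | ⟨x, y⟩ <;> rcases hZ with hZ | hZ
  · obtain ⟨e, he, rfl⟩ := unit_ratio x hw1
    obtain ⟨f, hf', rfl⟩ := unit_ratio y hw2
    have h3 : e ^ 3 * (starRingEnd ℂ) f ^ 3 = 1 := by
      apply mul_right_cancel₀ hZ0
      simp only [map_mul] at hZ
      linear_combination hZ
    have k := aux1 he hf' h3
    have k2 : e ^ 2 * (starRingEnd ℂ) f = 1 := by
      apply mul_right_cancel₀ hg0
      simp only [gg, map_mul] at hg ⊢
      linear_combination hg - w2 ^ 2 * (starRingEnd ℂ) w1 * k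
    have k3 : f = e ^ 2 := by linear_combination -f * k2 + e ^ 2 * hf'
    have k4 : (starRingEnd ℂ) f = (starRingEnd ℂ) e ^ 2 := by rw [k3, map_pow]
    have he3 : e ^ 3 = 1 := by
      rw [k4] at h3
      have : (e * (starRingEnd ℂ) e) ^ 3 = 1 := by rw [he, one_pow]
      have h5 : (starRingEnd ℂ) e ^ 3 = 1 := by linear_combination h3 - (starRingEnd ℂ) e ^ 3 * this
      linear_combination -e ^ 3 * h5 + this
    have hce := conj_of_cube he3
    convert diag_CC (-e) (by rw [neg_pow, he3]; norm_num) using 2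
    · simp only [Q1, map_mul, k4, hce]
      rw [div_eq_iff hN]
      linear_combination -e * w2 * (starRingEnd ℂ) w2 * he3
    · simp only [Q2, map_mul, hce, k3]
      rw [div_eq_iff hN]
      ring
  · obtain ⟨e, he, rfl⟩ := unit_ratio (x.trans (cw w1).symm) (conj_ne hw1)
    obtain ⟨f, hf', rfl⟩ := unit_ratio (y.trans (cw w2).symm) (conj_ne hw2)
    have h3 : e ^ 3 * (starRingEnd ℂ) f ^ 3 = 1 := by
      apply mul_right_cancel₀ hZ0'
      simp only [map_mul, map_pow, Complex.conj_conj] at hZ ⊢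
      linear_combination hZ
    have hω := aux2 he hf' h3
    apply unit_imag' _ hmem (hnorm (by simp [unit_norm he, unit_norm hf']))
      ((f * (starRingEnd ℂ) e) ^ 2) (by rw [← pow_mul, show 2 * 3 = 3 * 2 from rfl, pow_mul, hω, one_pow])
      (-(2 * ((f * (starRingEnd ℂ) e) ^ 2 * e * (starRingEnd ℂ) (w1 * w2)).im) /
        (normSq w1 + normSq w2))
    have hs := Complex.sub_conj ((f * (starRingEnd ℂ) e) ^ 2 * e * (starRingEnd ℂ) (w1 * w2))
    have hωω : (f * (starRingEnd ℂ) e) * (starRingEnd ℂ) (f * (starRingEnd ℂ) e) = 1 :=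
      conj_of_pow hω (by norm_num)
    simp only [Q2]
    rw [hNr]
    have ha : f * (starRingEnd ℂ) w2 * (starRingEnd ℂ) w1 -
        (starRingEnd ℂ) (e * (starRingEnd ℂ) w1) * w2 = (f * (starRingEnd ℂ) e) ^ 2 *
        (((2 * ((f * (starRingEnd ℂ) e) ^ 2 * e * (starRingEnd ℂ) (w1 * w2)).im : ℝ) : ℂ) * I) := by
      rw [← hs]
      simp only [map_mul, map_pow, Complex.conj_conj] at hωω ⊢
      generalize (starRingEnd ℂ) e = E at *
      generalize (starRingEnd ℂ) f = F at *
      generalize (starRingEnd ℂ) w1 = W1 at *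
      generalize (starRingEnd ℂ) w2 = W2 at *
      have h4 : ((f * E) * (F * e)) ^ 2 = 1 := by rw [hωω, one_pow]
      linear_combination -f * W1 * W2 * he - f * E * e * W1 * W2 * hω + E * w1 * w2 * h4
    rw [ha]
    push_cast
    ring
  · obtain ⟨e, he, rfl⟩ := unit_ratio (x.trans (cw w2).symm) (conj_ne hw2)
    obtain ⟨f, hf', rfl⟩ := unit_ratio (y.trans (cw w1).symm) (conj_ne hw1)
    have h3 : e ^ 3 * (starRingEnd ℂ) f ^ 3 = 1 := by
      apply mul_right_cancel₀ hZ0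
      simp only [map_mul, map_pow, Complex.conj_conj] at hZ ⊢
      linear_combination hZ
    have h3' : f ^ 3 * (starRingEnd ℂ) e ^ 3 = 1 := by
      have := congrArg (starRingEnd ℂ) h3
      simp only [map_mul, map_pow, Complex.conj_conj, map_one] at this
      linear_combination this
    have hω := aux2 hf' he h3'
    apply unit_real' _ hmem (hnorm (by simp [unit_norm he, unit_norm hf']; ring))
      ((e * (starRingEnd ℂ) f) ^ 2) (by rw [← pow_mul, show 2 * 3 = 3 * 2 from rfl, pow_mul, hω, one_pow])
      (-(2 * ((starRingEnd ℂ) ((e * (starRingEnd ℂ) f) ^ 2) * e * (starRingEnd ℂ) (w1 * w2)).re) /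
        (normSq w1 + normSq w2))
    have hs := Complex.add_conj
      ((starRingEnd ℂ) ((e * (starRingEnd ℂ) f) ^ 2) * e * (starRingEnd ℂ) (w1 * w2))
    have hωω : (e * (starRingEnd ℂ) f) * (starRingEnd ℂ) (e * (starRingEnd ℂ) f) = 1 :=
      conj_of_pow hω (by norm_num)
    simp only [Q1]
    rw [hNr]
    have ha : e * (starRingEnd ℂ) w2 * (starRingEnd ℂ) w1 +
        (starRingEnd ℂ) (f * (starRingEnd ℂ) w1) * w2 = (e * (starRingEnd ℂ) f) ^ 2 *
        ((2 * ((starRingEnd ℂ) ((e * (starRingEnd ℂ) f) ^ 2) * e *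
          (starRingEnd ℂ) (w1 * w2)).re : ℝ) : ℂ) := by
      rw [← hs]
      simp only [map_mul, map_pow, Complex.conj_conj] at hωω ⊢
      generalize (starRingEnd ℂ) e = E at *
      generalize (starRingEnd ℂ) f = F at *
      generalize (starRingEnd ℂ) w1 = W1 at *
      generalize (starRingEnd ℂ) w2 = W2 at *
      have h4 : ((e * F) * (E * f)) ^ 2 = 1 := by rw [hωω, one_pow]
      linear_combination -e * W1 * W2 * h4 - E * e * F * w1 * w2 * hω - F * w1 * w2 * he
    rw [ha]
    push_cast
    ring
  · exfalso
    obtain ⟨e, he, rfl⟩ := unit_ratio x hw2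
    obtain ⟨f, hf', rfl⟩ := unit_ratio y hw1
    have h3 : e ^ 3 * (starRingEnd ℂ) f ^ 3 = 1 := by
      apply mul_right_cancel₀ hZ0'
      simp only [map_mul, map_pow, Complex.conj_conj] at hZ ⊢
      linear_combination hZ
    have k := aux1 he hf' h3
    have k2 : e ^ 2 * (starRingEnd ℂ) f = -1 := by
      apply mul_right_cancel₀ hg0
      simp only [gg, map_mul] at hg ⊢
      linear_combination -hg + w1 ^ 2 * (starRingEnd ℂ) w2 * k
    have k3 : f = -e ^ 2 := by linear_combination f * k2 - e ^ 2 * hf'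
    have k4 : (starRingEnd ℂ) f = -(starRingEnd ℂ) e ^ 2 := by rw [k3, map_neg, map_pow]
    have this : (e * (starRingEnd ℂ) e) ^ 3 = 1 := by rw [he, one_pow]
    have he3 : e ^ 3 = -1 := by
      rw [k4] at h3
      have h5 : (starRingEnd ℂ) e ^ 3 = -1 := by
        linear_combination -h3 - (starRingEnd ℂ) e ^ 3 * this
      linear_combination e ^ 3 * h5 - this
    have hff : ff w1 w2 = 0 := by
      unfold ff at hf ⊢
      have hf3 : f ^ 3 = -1 := by rw [k3]; linear_combination (-e ^ 3 + 1) * he3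
      have : (2 : ℂ) * (w1 ^ 3 + w2 ^ 3) = 0 := by
        linear_combination -hf + w2 ^ 3 * he3 + w1 ^ 3 * hf3
      simpa using this
    have heq : ‖w1‖ = ‖w2‖ := by
      have h6 : w1 ^ 3 = -w2 ^ 3 := by unfold ff at hff; linear_combination hff
      have := congrArg (fun z => ‖z‖) h6
      simp only [norm_neg, norm_pow] at this
      exact (pow_left_inj₀ (norm_nonneg _) (norm_nonneg _) three_ne_zero).1 this
    have p := norm_pos_iff.2 hw2
    unfold Crit at hw
    rw [heq] at hw
    have : ‖w2‖ ^ 4 = 0 := by linarith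
    have : 0 < ‖w2‖ ^ 4 := by positivity
    linarith

/-- the pair map -/
noncomputable def Phi (p : ℂ × ℂ) : ℂ × ℂ := (ff p.1 p.2, gg p.1 p.2)

lemma inj_aux (u1 u2 a b : ℂ) (hu : u1 ≠ 0 ∨ u2 ≠ 0) (hc : ¬ Crit u1 u2)
    (h1 : u1 ^ 2 * a + u2 ^ 2 * b = 0)
    (h2 : -(2 * u1 * a * (starRingEnd ℂ) u2) - u1 ^ 2 * (starRingEnd ℂ) b +
      2 * u2 * b * (starRingEnd ℂ) u1 + u2 ^ 2 * (starRingEnd ℂ) a = 0) : a = 0 ∧ b = 0 := by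
  have hD : (0 : ℝ) < ‖u1‖ ^ 4 + ‖u2‖ ^ 4 := by
    rcases hu with h | h
    · have := norm_pos_iff.2 h; positivity
    · have := norm_pos_iff.2 h; positivity
  have m1 : u1 * (starRingEnd ℂ) u1 = ((‖u1‖ ^ 2 : ℝ) : ℂ) := by
    rw [Complex.mul_conj, normSq_eq_norm_sq]
  have m2 : u2 * (starRingEnd ℂ) u2 = ((‖u2‖ ^ 2 : ℝ) : ℂ) := by
    rw [Complex.mul_conj, normSq_eq_norm_sq]
  have hDc : (u1 * (starRingEnd ℂ) u1) ^ 2 + (u2 * (starRingEnd ℂ) u2) ^ 2 =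
      ((‖u1‖ ^ 4 + ‖u2‖ ^ 4 : ℝ) : ℂ) := by
    rw [m1, m2]; push_cast; ring
  have hD0 : (u1 * (starRingEnd ℂ) u1) ^ 2 + (u2 * (starRingEnd ℂ) u2) ^ 2 ≠ 0 := by
    rw [hDc]; exact_mod_cast hD.ne'
  obtain ⟨s, ha, hb⟩ : ∃ s : ℂ, a = s * u2 ^ 2 ∧ b = -s * u1 ^ 2 := by
    refine ⟨((starRingEnd ℂ) u2 ^ 2 * a - (starRingEnd ℂ) u1 ^ 2 * b) /
      ((u1 * (starRingEnd ℂ) u1) ^ 2 + (u2 * (starRingEnd ℂ) u2) ^ 2), ?_, ?_⟩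
    · rw [div_mul_eq_mul_div, eq_div_iff hD0]
      linear_combination (starRingEnd ℂ) u1 ^ 2 * h1
    · rw [neg_mul, div_mul_eq_mul_div, ← neg_div, eq_div_iff hD0]
      linear_combination (starRingEnd ℂ) u2 ^ 2 * h1
  have hs : s = 0 := by
    by_contra hs0
    apply hc
    rw [ha, hb] at h2
    simp only [map_mul, map_neg, map_pow] at h2
    have e : (starRingEnd ℂ) s * ((‖u1‖ ^ 4 + ‖u2‖ ^ 4 : ℝ) : ℂ) =
        2 * s * u1 * u2 * ((‖u1‖ ^ 2 + ‖u2‖ ^ 2 : ℝ) : ℂ) := by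
      rw [← hDc, Complex.ofReal_add, ← m1, ← m2]
      linear_combination h2
    have e2 := congrArg (fun z => ‖z‖) e
    simp only [norm_mul, RCLike.norm_conj, Complex.norm_real, Real.norm_eq_abs] at e2
    rw [abs_of_pos hD, abs_of_nonneg (by positivity : 0 ≤ ‖u1‖ ^ 2 + ‖u2‖ ^ 2)] at e2
    have : (0 : ℝ) < ‖s‖ := norm_pos_iff.2 hs0
    unfold Crit
    apply mul_left_cancel₀ this.ne'
    rw [e2]; simp; ring
  rw [ha, hb, hs]; simp

lemma Phi_open (u : ℂ × ℂ) (hu : u.1 ≠ 0 ∨ u.2 ≠ 0) (hc : ¬ Crit u.1 u.2) :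
    Filter.map Phi (nhds u) = nhds (Phi u) := by
  have h1 : HasStrictFDerivAt (𝕜 := ℝ) (fun p : ℂ × ℂ => p.1) (ContinuousLinearMap.fst ℝ ℂ ℂ) u :=
    hasStrictFDerivAt_fst
  have h2 : HasStrictFDerivAt (𝕜 := ℝ) (fun p : ℂ × ℂ => p.2) (ContinuousLinearMap.snd ℝ ℂ ℂ) u :=
    hasStrictFDerivAt_snd
  have c1 : HasStrictFDerivAt (𝕜 := ℝ) (fun p : ℂ × ℂ => (starRingEnd ℂ) p.1)
      ((conjCLE : ℂ →L[ℝ] ℂ).comp (ContinuousLinearMap.fst ℝ ℂ ℂ)) u :=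
    ((conjCLE : ℂ →L[ℝ] ℂ).comp (ContinuousLinearMap.fst ℝ ℂ ℂ)).hasStrictFDerivAt
  have c2 : HasStrictFDerivAt (𝕜 := ℝ) (fun p : ℂ × ℂ => (starRingEnd ℂ) p.2)
      ((conjCLE : ℂ →L[ℝ] ℂ).comp (ContinuousLinearMap.snd ℝ ℂ ℂ)) u :=
    ((conjCLE : ℂ →L[ℝ] ℂ).comp (ContinuousLinearMap.snd ℝ ℂ ℂ)).hasStrictFDerivAt
  have hF := (h1.mul (h1.mul h1)).add (h2.mul (h2.mul h2))
  have hG := ((h2.mul h2).mul c1).sub ((h1.mul h1).mul c2)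
  have hP := hF.prodMk hG
  have hfun : (fun p : ℂ × ℂ => ((fun p : ℂ × ℂ => p.1 * (p.1 * p.1) + p.2 * (p.2 * p.2)) p,
      (fun p : ℂ × ℂ => p.2 * p.2 * (starRingEnd ℂ) p.1 - p.1 * p.1 * (starRingEnd ℂ) p.2) p)) =
      Phi := by
    funext p
    simp only [Phi, ff, gg, Prod.mk.injEq]
    constructor <;> ring
  have hP2 := hP
  apply HasStrictFDerivAt.map_nhds_eq_of_surj (𝕜 := ℝ)
    (f' := _) (hfun ▸ hP)
  rw [LinearMap.range_eq_top]
  apply LinearMap.surjective_of_injective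
  rw [← LinearMap.ker_eq_bot, LinearMap.ker_eq_bot']
  rintro ⟨a, b⟩ hab
  simp [Prod.ext_iff] at hab
  obtain ⟨e1, e2⟩ := hab
  obtain ⟨r1, r2⟩ := inj_aux u.1 u.2 a b hu hc (by linear_combination e1 / 3)
    (by linear_combination e2)
  simp [r1, r2]

/-- the height function -/
noncomputable def HH (w : ℂ × ℂ) : ℝ :=
  normSq (gg w.1 w.2) / (normSq (ff w.1 w.2) + normSq (gg w.1 w.2))

lemma normSq_ff (a b : ℂ) : normSq (ff a b) =
    normSq a ^ 3 + normSq b ^ 3 + 2 * (a ^ 3 * (starRingEnd ℂ) b ^ 3).re := by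
  simp only [ff, normSq_apply, pow_succ, pow_zero, one_mul, add_re, add_im, mul_re, mul_im,
    neg_re, neg_im, conj_re, conj_im]
  ring

lemma den_pos (w1 w2 : ℂ) (h : gg w1 w2 ≠ 0) : 0 < normSq (ff w1 w2) + normSq (gg w1 w2) :=
  add_pos_of_nonneg_of_pos (normSq_nonneg _) (normSq_pos.2 h)

lemma HH_swap (w1 w2 : ℂ) : HH (w2, w1) = HH (w1, w2) := by
  have h1 : gg w2 w1 = -gg w1 w2 := by unfold gg; ring
  have h2 : ff w2 w1 = ff w1 w2 := by unfold ff; ring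
  simp only [HH, h1, h2, normSq_neg]

lemma locmin_rot (w1 w2 : ℂ) (hg : gg w1 w2 ≠ 0) (h : IsLocalMin HH (w1, w2)) :
    (w1 ^ 3 * (starRingEnd ℂ) w2 ^ 3).re = ‖w1‖ ^ 3 * ‖w2‖ ^ 3 := by
  have hc : Continuous (fun t : ℝ => ((Complex.exp (t * I) * w1, w2) : ℂ × ℂ)) := by fun_prop
  have ht : Filter.Tendsto (fun t : ℝ => ((Complex.exp (t * I) * w1, w2) : ℂ × ℂ)) (nhds 0)
      (nhds (w1, w2)) := by
    have := hc.tendsto 0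
    simpa using this
  set Z := w1 ^ 3 * (starRingEnd ℂ) w2 ^ 3 with hZ
  have hev : ∀ᶠ t : ℝ in nhds 0, Real.cos (3 * t) * Z.re - Real.sin (3 * t) * Z.im ≤ Z.re := by
    filter_upwards [ht.eventually h] with t hh
    have hn : normSq (Complex.exp (t * I) * w1) = normSq w1 := by
      rw [map_mul, normSq_eq_norm_sq (Complex.exp _), Complex.norm_exp_ofReal_mul_I]; ring
    unfold HH at hh
    simp only at hh
    rw [normSq_ff_gg, normSq_ff_gg, hn] at hh
    have hp := den_pos w1 w2 hg
    rw [normSq_ff_gg] at hp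
    rw [div_le_div_iff_of_pos_right hp, normSq_gg, normSq_gg, hn] at hh
    have e : (Complex.exp (t * I) * w1) ^ 3 * (starRingEnd ℂ) w2 ^ 3 =
        Complex.exp (((3 * t : ℝ) : ℂ) * I) * Z := by
      rw [mul_pow, ← Complex.exp_nat_mul, hZ]
      push_cast
      ring_nf
    rw [e, Complex.mul_re (Complex.exp _) Z, Complex.exp_ofReal_mul_I_re,
      Complex.exp_ofReal_mul_I_im, ← hZ] at hh
    linarith
  have him : Z.im = 0 := by
    have hmax : IsLocalMax (fun t : ℝ => Real.cos (3 * t) * Z.re - Real.sin (3 * t) * Z.im) 0 := by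
      filter_upwards [hev] with t ht
      simpa using ht
    have hl : HasDerivAt (fun t : ℝ => 3 * t) 3 0 := by
      simpa using (hasDerivAt_id (0 : ℝ)).const_mul 3
    have hd := ((hl.cos).mul_const Z.re).sub ((hl.sin).mul_const Z.im)
    have := hmax.hasDerivAt_eq_zero hd
    simp at this
    exact this
  have hre : 0 ≤ Z.re := by
    by_contra hcon
    push Not at hcon
    have h1 : ∀ᶠ t : ℝ in nhdsWithin 0 (Set.Ioi 0),
        Real.cos (3 * t) * Z.re - Real.sin (3 * t) * Z.im ≤ Z.re := hev.filter_mono nhdsWithin_le_nhds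
    have h2 : ∀ᶠ t : ℝ in nhdsWithin 0 (Set.Ioi 0), t ∈ Set.Ioo (0 : ℝ) 1 :=
      Ioo_mem_nhdsGT (by norm_num)
    obtain ⟨t, h3, h4⟩ := (h1.and h2).exists
    rw [him] at h3
    have h5 : Real.cos (3 * t) < 1 := by
      rw [← Real.cos_zero]
      exact Real.cos_lt_cos_of_nonneg_of_le_pi le_rfl
        (by have := Real.pi_gt_three; linarith [h4.2]) (by linarith [h4.1])
    nlinarith
  have hn : ‖Z‖ = ‖w1‖ ^ 3 * ‖w2‖ ^ 3 := by
    rw [hZ, norm_mul, norm_pow, norm_pow, RCLike.norm_conj]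
  rw [← hn]
  have : Z = (Z.re : ℂ) := by apply Complex.ext <;> simp [him]
  rw [this, Complex.norm_real, Real.norm_eq_abs, Complex.ofReal_re, abs_of_nonneg hre]

lemma locmin_scale (w1 w2 : ℂ) (hg : gg w1 w2 ≠ 0) (hlt : ‖w1‖ < ‖w2‖)
    (h : IsLocalMin HH (w1, w2)) : False := by
  have hZ := locmin_rot w1 w2 hg h
  obtain ⟨hw1, hw2⟩ := gg_ne hg
  have p1 := norm_pos_iff.2 hw1
  have p2 := norm_pos_iff.2 hw2
  set r := ‖w1‖ with hr
  set R := ‖w2‖ with hR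
  have eG : ∀ s : ℝ, normSq (gg ((s : ℂ) * w1) w2) = (s * r * R * (R - s * r)) ^ 2 := by
    intro s
    have : ((s : ℂ) * w1) ^ 3 * (starRingEnd ℂ) w2 ^ 3 =
      ((s ^ 3 : ℝ) : ℂ) * (w1 ^ 3 * (starRingEnd ℂ) w2 ^ 3) := by push_cast; ring
    rw [normSq_gg, this, Complex.re_ofReal_mul, hZ, map_mul, normSq_ofReal, normSq_eq_norm_sq,
      normSq_eq_norm_sq, ← hr, ← hR]
    ring
  have eF : ∀ s : ℝ, normSq (ff ((s : ℂ) * w1) w2) = (s ^ 3 * r ^ 3 + R ^ 3) ^ 2 := by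
    intro s
    have : ((s : ℂ) * w1) ^ 3 * (starRingEnd ℂ) w2 ^ 3 =
      ((s ^ 3 : ℝ) : ℂ) * (w1 ^ 3 * (starRingEnd ℂ) w2 ^ 3) := by push_cast; ring
    rw [normSq_ff, this, Complex.re_ofReal_mul, hZ, map_mul, normSq_ofReal, normSq_eq_norm_sq,
      normSq_eq_norm_sq, ← hr, ← hR]
    ring
  have hev : ∀ᶠ s : ℝ in nhds 1, (r * R * (R - r)) * (s ^ 3 * r ^ 3 + R ^ 3) ≤
      (s * r * R * (R - s * r)) * (r ^ 3 + R ^ 3) := by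
    have hc : Continuous (fun t : ℝ => (((t : ℂ) * w1, w2) : ℂ × ℂ)) := by fun_prop
    have ht : Filter.Tendsto (fun t : ℝ => (((t : ℂ) * w1, w2) : ℂ × ℂ)) (nhds 1)
        (nhds (w1, w2)) := by
      have := hc.tendsto 1
      simpa using this
    have e1 : ∀ᶠ s : ℝ in nhds 1, 0 < s := lt_mem_nhds one_pos
    have e2 : ∀ᶠ s : ℝ in nhds 1, s * r < R := by
      have : Continuous (fun s : ℝ => s * r) := by fun_prop
      exact this.tendsto 1 (gt_mem_nhds (by simpa using hlt))
    filter_upwards [ht.eventually h, e1, e2] with s hs h0 hsR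
    have g1 := eG 1
    have f1 := eF 1
    simp only [Complex.ofReal_one, one_mul, one_pow] at g1 f1
    unfold HH at hs
    simp only at hs
    rw [eG, eF, g1, f1] at hs
    have a1 : 0 < r * R * (R - r) := mul_pos (by positivity) (by linarith)
    have a2 : 0 < s * r * R * (R - s * r) := mul_pos (by positivity) (by linarith)
    rw [div_le_div_iff₀ (by positivity) (by positivity)] at hs
    have k1 : 0 ≤ s ^ 3 * r ^ 3 + R ^ 3 := by positivity
    have k2 : 0 ≤ r ^ 3 + R ^ 3 := by positivity
    refine (sq_le_sq₀ (mul_nonneg a1.le k1) (mul_nonneg a2.le k2)).1 ?_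
    rw [mul_pow, mul_pow]
    linarith
  have hp : ∀ᶠ η : ℝ in nhds 0, (r * R * (R - r)) * ((1 + η) ^ 3 * r ^ 3 + R ^ 3) ≤
      ((1 + η) * r * R * (R - (1 + η) * r)) * (r ^ 3 + R ^ 3) := by
    have : Filter.Tendsto (fun η : ℝ => 1 + η) (nhds 0) (nhds 1) := by
      have hc : Continuous (fun η : ℝ => 1 + η) := by fun_prop
      simpa using hc.tendsto 0
    exact this.eventually hev
  have hm : ∀ᶠ η : ℝ in nhds 0, (r * R * (R - r)) * ((1 - η) ^ 3 * r ^ 3 + R ^ 3) ≤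
      ((1 - η) * r * R * (R - (1 - η) * r)) * (r ^ 3 + R ^ 3) := by
    have : Filter.Tendsto (fun η : ℝ => 1 - η) (nhds 0) (nhds 1) := by
      have hc : Continuous (fun η : ℝ => 1 - η) := by fun_prop
      simpa using hc.tendsto 0
    exact this.eventually hev
  have h1 := (hp.and hm).filter_mono (nhdsWithin_le_nhds (s := Set.Ioi 0))
  have h2 : ∀ᶠ t : ℝ in nhdsWithin 0 (Set.Ioi 0), t ∈ Set.Ioo (0 : ℝ) 1 :=
    Ioo_mem_nhdsGT (by norm_num)
  obtain ⟨η, ⟨h3, h4⟩, h5⟩ := (h1.and h2).exists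
  have hη := h5.1
  have k1 : 0 < r ^ 2 * R * (r ^ 3 + R ^ 3) * η ^ 2 := by positivity
  have k2 : 0 < r * R * (R - r) * r ^ 3 * η ^ 2 :=
    mul_pos (mul_pos (mul_pos (by positivity) (by linarith)) (by positivity)) (by positivity)
  nlinarith

lemma not_locmin (w1 w2 : ℂ) (hg : gg w1 w2 ≠ 0) : ¬ IsLocalMin HH (w1, w2) := by
  intro h
  rcases lt_trichotomy ‖w1‖ ‖w2‖ with hlt | heq | hlt
  · exact locmin_scale w1 w2 hg hlt h
  · have hZ := locmin_rot w1 w2 hg h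
    have : normSq (gg w1 w2) = 0 := by
      rw [normSq_gg, hZ, normSq_eq_norm_sq, normSq_eq_norm_sq, heq]; ring
    exact hg (normSq_eq_zero.1 this)
  · have hg' : gg w2 w1 ≠ 0 := by
      have h1 : gg w2 w1 = -gg w1 w2 := by unfold gg; ring
      rw [h1]; exact neg_ne_zero.2 hg
    apply locmin_scale w2 w1 hg' hlt
    have ht : Filter.Tendsto (Prod.swap : ℂ × ℂ → ℂ × ℂ) (nhds (w2, w1)) (nhds (w1, w2)) :=
      continuous_swap.tendsto (w2, w1)
    filter_upwards [ht.eventually h] with p hp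
    have e1 := HH_swap p.2 p.1
    have e2 := HH_swap w1 w2
    simp only [Prod.swap] at hp
    rw [e2, e1]; exact hp

lemma HH_congr {u w : ℂ × ℂ} (h : Phi u = Phi w) : HH u = HH w := by
  have h1 : ff u.1 u.2 = ff w.1 w.2 := congrArg Prod.fst h
  have h2 : gg u.1 u.2 = gg w.1 w.2 := congrArg Prod.snd h
  unfold HH
  rw [h1, h2]

lemma Phi_cont : Continuous Phi := by
  unfold Phi ff gg
  have : Continuous (fun z : ℂ => (starRingEnd ℂ) z) := Complex.continuous_conj
  fun_prop

/-- one-sided perturbation -/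
lemma perturb (u w : ℂ × ℂ) (hP : Phi u = Phi w) (hg : gg w.1 w.2 ≠ 0)
    (hc : ¬ Crit u.1 u.2) (U W : Set (ℂ × ℂ)) (hU : U ∈ nhds u) (hW : W ∈ nhds w) :
    ∃ u' ∈ U, ∃ w' ∈ W, Phi u' = Phi w' ∧ HH w' < HH w := by
  have hgu : gg u.1 u.2 ≠ 0 := by
    have : gg u.1 u.2 = gg w.1 w.2 := congrArg Prod.snd hP
    rw [this]; exact hg
  have ho := Phi_open u (Or.inl (gg_ne hgu).1) hc
  have h1 : Phi '' U ∈ nhds (Phi w) := by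
    rw [← hP, ← ho]
    exact Filter.image_mem_map hU
  have h2 : ∀ᶠ w' in nhds w, Phi w' ∈ Phi '' U := Phi_cont.continuousAt h1
  have h3 : ∃ᶠ w' in nhds w, HH w' < HH w := by
    have := not_locmin w.1 w.2 hg
    unfold IsLocalMin IsMinFilter at this
    rw [Filter.not_eventually] at this
    simpa using this
  obtain ⟨w', h4, h5, h6⟩ := (h3.and_eventually (h2.and hW)).exists
  obtain ⟨u', h7, h8⟩ := h5
  exact ⟨u', h7, w', h6, h8, h4⟩

lemma perturb2 (u w : ℂ × ℂ) (hP : Phi u = Phi w) (hg : gg w.1 w.2 ≠ 0)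
    (hc : ¬ (Crit u.1 u.2 ∧ Crit w.1 w.2)) (V : Set ((ℂ × ℂ) × (ℂ × ℂ))) (hV : V ∈ nhds (u, w)) :
    ∃ p ∈ V, Phi p.1 = Phi p.2 ∧ HH p.2 < HH w := by
  obtain ⟨U, hU, W, hW, hUW⟩ := mem_nhds_prod_iff.1 hV
  by_cases hcu : Crit u.1 u.2
  · have hcw : ¬ Crit w.1 w.2 := fun h => hc ⟨hcu, h⟩
    have hgu : gg u.1 u.2 ≠ 0 := by
      have : gg u.1 u.2 = gg w.1 w.2 := congrArg Prod.snd hP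
      rw [this]; exact hg
    obtain ⟨w', h1, u', h2, h3, h4⟩ := perturb w u hP.symm hgu hcw W U hW hU
    refine ⟨(u', w'), hUW ⟨h2, h1⟩, h3.symm, ?_⟩
    simp only
    rw [HH_congr h3, ← HH_congr hP]; exact h4
  · obtain ⟨u', h2, w', h1, h3, h4⟩ := perturb u w hP hg hcu U W hU hW
    exact ⟨(u', w'), hUW ⟨h2, h1⟩, h3, h4⟩

/-- the quaternion determined by a pair of pairs -/
noncomputable def QQ (p : (ℂ × ℂ) × (ℂ × ℂ)) : ℂ × ℂ :=
  (Q1 p.1.1 p.1.2 p.2.1 p.2.2, Q2 p.1.1 p.1.2 p.2.1 p.2.2)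

/-- polynomial version of `QQ` -/
noncomputable def RR (p : (ℂ × ℂ) × (ℂ × ℂ)) : ℂ × ℂ :=
  (-(p.1.1 * (starRingEnd ℂ) p.2.1 + (starRingEnd ℂ) p.1.2 * p.2.2),
    -(p.1.2 * (starRingEnd ℂ) p.2.1 - (starRingEnd ℂ) p.1.1 * p.2.2))

lemma RR_cont : Continuous RR := by
  unfold RR
  have : Continuous (fun z : ℂ => (starRingEnd ℂ) z) := Complex.continuous_conj
  fun_prop

lemma QQ_eq_RR (p : (ℂ × ℂ) × (ℂ × ℂ)) (h : normSq p.2.1 + normSq p.2.2 = 1) : QQ p = RR p := by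
  have : p.2.1 * (starRingEnd ℂ) p.2.1 + p.2.2 * (starRingEnd ℂ) p.2.2 = 1 := by
    rw [Complex.mul_conj, Complex.mul_conj, ← Complex.ofReal_add, h]; simp
  simp only [QQ, RR, Q1, Q2, this, div_one]

lemma QQ_contAt (p : (ℂ × ℂ) × (ℂ × ℂ)) (h : p.2.1 ≠ 0 ∨ p.2.2 ≠ 0) : ContinuousAt QQ p := by
  have hN := mul_conj_add_ne _ _ h
  have : Continuous (fun z : ℂ => (starRingEnd ℂ) z) := Complex.continuous_conj
  unfold QQ Q1 Q2
  refine ContinuousAt.prodMk (ContinuousAt.div ?_ ?_ hN) (ContinuousAt.div ?_ ?_ hN) <;>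
  · apply Continuous.continuousAt
    fun_prop

/-- real scaling -/
noncomputable def sc (c : ℝ) (u : ℂ × ℂ) : ℂ × ℂ := ((c : ℂ) * u.1, (c : ℂ) * u.2)

lemma Phi_sc (c : ℝ) (u : ℂ × ℂ) :
    Phi (sc c u) = ((c : ℂ) ^ 3 * (Phi u).1, (c : ℂ) ^ 3 * (Phi u).2) := by
  simp only [Phi, sc, ff, gg, map_mul, Complex.conj_ofReal]
  ext1
  · simp only; ring
  · simp only; ring

lemma HH_sc (c : ℝ) (hc : c ≠ 0) (u : ℂ × ℂ) : HH (sc c u) = HH u := by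
  have h1 : ff (sc c u).1 (sc c u).2 = (c : ℂ) ^ 3 * ff u.1 u.2 := congrArg Prod.fst (Phi_sc c u)
  have h2 : gg (sc c u).1 (sc c u).2 = (c : ℂ) ^ 3 * gg u.1 u.2 := congrArg Prod.snd (Phi_sc c u)
  unfold HH
  rw [h1, h2, map_mul, map_mul, ← mul_add]
  apply mul_div_mul_left
  simp [hc]

lemma QQ_sc (c : ℝ) (hc : c ≠ 0) (u w : ℂ × ℂ) : QQ (sc c u, sc c w) = QQ (u, w) := by
  have hc' : (c : ℂ) ^ 2 ≠ 0 := pow_ne_zero _ (by exact_mod_cast hc)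
  simp only [QQ, Q1, Q2, sc, map_mul, Complex.conj_ofReal]
  ext1
  · simp only
    rw [← mul_div_mul_left (-(u.1 * (starRingEnd ℂ) w.1 + (starRingEnd ℂ) u.2 * w.2)) _ hc']
    congr 1 <;> ring
  · simp only
    rw [← mul_div_mul_left (-(u.2 * (starRingEnd ℂ) w.1 - (starRingEnd ℂ) u.1 * w.2)) _ hc']
    congr 1 <;> ring

lemma nsq_pos (w : ℂ × ℂ) (h : w.1 ≠ 0 ∨ w.2 ≠ 0) : 0 < normSq w.1 + normSq w.2 := by
  rcases h with h | h
  · exact add_pos_of_pos_of_nonneg (normSq_pos.2 h) (normSq_nonneg _)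
  · exact add_pos_of_nonneg_of_pos (normSq_nonneg _) (normSq_pos.2 h)

/-- normalised pairs lying over `K` -/
def SS (K : Set (ℂ × ℂ)) : Set ((ℂ × ℂ) × (ℂ × ℂ)) :=
  {p | normSq p.2.1 + normSq p.2.2 = 1 ∧ Phi p.1 = Phi p.2 ∧ RR p ∈ K}

lemma normalise (K : Set (ℂ × ℂ)) (u w : ℂ × ℂ) (hw : w.1 ≠ 0 ∨ w.2 ≠ 0) (hP : Phi u = Phi w)
    (hK : QQ (u, w) ∈ K) : ∃ p ∈ SS K, HH p.2 = HH w := by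
  have hp := nsq_pos w hw
  set n := normSq w.1 + normSq w.2 with hn
  have hs : √n ≠ 0 := (Real.sqrt_pos.2 hp).ne'
  have hc : (√n)⁻¹ ≠ 0 := inv_ne_zero hs
  have h1 : normSq (sc (√n)⁻¹ w).1 + normSq (sc (√n)⁻¹ w).2 = 1 := by
    simp only [sc, map_mul, normSq_ofReal]
    rw [← mul_add, ← hn, ← mul_inv, Real.mul_self_sqrt hp.le, inv_mul_cancel₀ hp.ne']
  refine ⟨(sc (√n)⁻¹ u, sc (√n)⁻¹ w), ⟨h1, ?_, ?_⟩, HH_sc _ hc w⟩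
  · simp only [Phi_sc, hP]
  · rw [← QQ_eq_RR _ h1, QQ_sc _ hc]; exact hK

lemma SS_compact (K : Set (ℂ × ℂ)) (hK : IsClosed K) : IsCompact (SS K) := by
  apply Metric.isCompact_of_isClosed_isBounded
  · have c1 : Continuous (fun p : (ℂ × ℂ) × (ℂ × ℂ) => normSq p.2.1 + normSq p.2.2) := by
      have := Complex.continuous_normSq
      fun_prop
    have c2 := Phi_cont
    exact (isClosed_eq c1 continuous_const).inter
      ((isClosed_eq (c2.comp continuous_fst) (c2.comp continuous_snd)).inter
        (hK.preimage RR_cont))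
  · rw [isBounded_iff_forall_norm_le]
    refine ⟨2, fun p hp => ?_⟩
    obtain ⟨h1, h2, -⟩ := hp
    have e1 : ff p.1.1 p.1.2 = ff p.2.1 p.2.2 := congrArg Prod.fst h2
    have e2 : gg p.1.1 p.1.2 = gg p.2.1 p.2.2 := congrArg Prod.snd h2
    have h3 := normSq_ff_gg p.1.1 p.1.2
    rw [e1, e2, normSq_ff_gg, h1, one_mul] at h3
    have a1 := normSq_nonneg p.1.1
    have a2 := normSq_nonneg p.1.2
    have a3 := normSq_nonneg p.2.1
    have a4 := normSq_nonneg p.2.2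
    have b1 : normSq p.2.1 ^ 2 + normSq p.2.2 ^ 2 ≤ 1 := by nlinarith [mul_nonneg a3 a4]
    have key : ∀ x y : ℝ, 0 ≤ x → 0 ≤ y → (x + y) * (x ^ 2 + y ^ 2) ≤ 1 → x ≤ 4 := by
      intro x y hx hy h
      by_contra hcon
      push Not at hcon
      have : x * x ^ 2 ≤ (x + y) * (x ^ 2 + y ^ 2) := by gcongr <;> nlinarith
      nlinarith
    have k1 := key _ _ a1 a2 (by linarith)
    have k2 := key _ _ a2 a1 (by linarith)
    have k3 : normSq p.2.1 ≤ 4 := by linarith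
    have k4 : normSq p.2.2 ≤ 4 := by linarith
    have fin : ∀ z : ℂ, normSq z ≤ 4 → ‖z‖ ≤ 2 := by
      intro z hz
      rw [normSq_eq_norm_sq] at hz
      nlinarith [norm_nonneg z]
    simp only [Prod.norm_def]
    exact max_le (max_le (fin _ k1) (fin _ k2)) (max_le (fin _ k3) (fin _ k4))

lemma HH_contOn (K : Set (ℂ × ℂ)) : ContinuousOn (fun p : (ℂ × ℂ) × (ℂ × ℂ) => HH p.2) (SS K) := by
  have c0 := Complex.continuous_normSq
  have c1 : Continuous (fun p : (ℂ × ℂ) × (ℂ × ℂ) => normSq (ff p.2.1 p.2.2)) :=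
    c0.comp (continuous_fst.comp (Phi_cont.comp continuous_snd))
  have c2 : Continuous (fun p : (ℂ × ℂ) × (ℂ × ℂ) => normSq (gg p.2.1 p.2.2)) :=
    c0.comp (continuous_snd.comp (Phi_cont.comp continuous_snd))
  unfold HH
  apply ContinuousOn.div c2.continuousOn (c1.add c2).continuousOn
  intro p hp
  have h1 := hp.1
  change normSq (ff p.2.1 p.2.2) + normSq (gg p.2.1 p.2.2) ≠ 0
  rw [normSq_ff_gg, h1]
  have a3 := normSq_nonneg p.2.1
  have a4 := normSq_nonneg p.2.2
  intro h
  nlinarith [sq_nonneg (normSq p.2.1 - normSq p.2.2)]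

lemma key_sep (A B : Set (ℂ × ℂ)) (hA : IsClosed A) (hB : IsClosed B)
    (hAB : fermatDiscriminantLocus ⊆ A ∪ B) (hd : fermatDiscriminantLocus ∩ (A ∩ B) = ∅)
    (hCC : CC ⊆ A) : fermatDiscriminantLocus ⊆ A := by
  intro q hq
  by_contra hqA
  set K := fermatDiscriminantLocus ∩ B with hK
  have hKA : ∀ x ∈ K, x ∉ A := by
    intro x hx hxA
    have : x ∈ fermatDiscriminantLocus ∩ (A ∩ B) := ⟨hx.1, hxA, hx.2⟩
    rw [hd] at this; exact this
  have hKc : IsClosed K := isClosed_D.inter hB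
  have hqK : q ∈ K := ⟨hq, (hAB hq).resolve_left hqA⟩
  have hne : (SS K).Nonempty := by
    obtain ⟨u1, u2, w1, w2, hw, hf, hg, he⟩ := mem_imp_Q q hq
    obtain ⟨p, hp, -⟩ := normalise K (u1, u2) (w1, w2) hw (Prod.ext hf hg) (by
      rw [he] at hqK; exact hqK)
    exact ⟨p, hp⟩
  obtain ⟨⟨u, w⟩, hp, hmin⟩ := (SS_compact K hKc).exists_isMinOn hne (HH_contOn K)
  obtain ⟨h1, h2, h3⟩ := hp
  rw [← QQ_eq_RR _ h1] at h3
  simp only at h1 h2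
  have hw : w.1 ≠ 0 ∨ w.2 ≠ 0 := by
    by_contra hcon
    push Not at hcon
    rw [hcon.1, hcon.2] at h1
    simp at h1
  have hf : ff u.1 u.2 = ff w.1 w.2 := congrArg Prod.fst h2
  have hg : gg u.1 u.2 = gg w.1 w.2 := congrArg Prod.snd h2
  have hnA := hKA _ h3
  have hg0 : gg w.1 w.2 ≠ 0 := fun h0 =>
    hnA (hCC (g_zero_CC u.1 u.2 w.1 w.2 hw hf (hg.trans h0) h0))
  have hcr : ¬ (Crit u.1 u.2 ∧ Crit w.1 w.2) := fun hc =>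
    hnA (hCC (crit_CC u.1 u.2 w.1 w.2 hf hg hg0 hc.1 hc.2))
  have hV1 : ∀ᶠ p in nhds (u, w), QQ p ∉ A :=
    (QQ_contAt (u, w) hw) (hA.isOpen_compl.mem_nhds hnA)
  have hV2 : ∀ᶠ p : (ℂ × ℂ) × (ℂ × ℂ) in nhds (u, w), gg p.2.1 p.2.2 ≠ 0 := by
    have c2 : Continuous (fun p : (ℂ × ℂ) × (ℂ × ℂ) => gg p.2.1 p.2.2) :=
      continuous_snd.comp (Phi_cont.comp continuous_snd)
    exact c2.continuousAt.eventually_ne hg0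
  obtain ⟨p, ⟨hpA, hpg⟩, hpP, hlt⟩ := perturb2 u w h2 hg0 hcr _ (hV1.and hV2)
  have hpw : p.2.1 ≠ 0 ∨ p.2.2 ≠ 0 := Or.inl (gg_ne hpg).1
  have hpD : QQ p ∈ fermatDiscriminantLocus :=
    Q_mem _ _ _ _ hpw (congrArg Prod.fst hpP) (congrArg Prod.snd hpP)
  have hpK : QQ (p.1, p.2) ∈ K := ⟨hpD, (hAB hpD).resolve_left hpA⟩
  obtain ⟨p', hp', he⟩ := normalise K p.1 p.2 hpw hpP hpK
  have := hmin hp'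
  simp only [Set.mem_ofPred_eq] at this
  linarith

lemma isConnected_D : IsConnected fermatDiscriminantLocus := by
  refine ⟨⟨_, base_mem⟩, ?_⟩
  rw [isPreconnected_iff_subset_of_disjoint_closed]
  intro A B hA hB hAB hd
  have hC : IsPreconnected CC := isPreconnected_connectedComponentIn
  have hCd : CC ∩ (A ∩ B) = ∅ := by
    rw [Set.eq_empty_iff_forall_notMem] at hd ⊢
    exact fun x hx => hd x ⟨CC_subset_D hx.1, hx.2⟩
  rcases isPreconnected_iff_subset_of_disjoint_closed.1 hC A B hA hB
    (CC_subset_D.trans hAB) hCd with h | h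
  · exact Or.inl (key_sep A B hA hB hAB hd h)
  · exact Or.inr (key_sep B A hB hA (by rwa [Set.union_comm]) (by rwa [Set.inter_comm B A]) h)

end FermatTw

/-- The discriminant locus of the Fermat cubic is a compact connected subset of `ℝ⁴`. -/
theorem fermat_discriminant_locus_compact_connected :
    IsCompact fermatDiscriminantLocus ∧ IsConnected fermatDiscriminantLocus := by
  exact ⟨FermatTw.isCompact_D, FermatTw.isConnected_D⟩
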